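/- Assume p = 2 (so q = 2 and |·| = |·|_* is the Euclidean norm on ℝ^d) and that μ is a martingale measure. Define, for δ > 0, V_Mart(δ) = sup { E_π[f(Y)] − L_δ(E_π[c_N(X, Y)]^{1/2}) : π a bicausal coupling with first marginal μ whose second marginal is a martingale measure and E_π[c_N(X, Y)] < ∞ }, and V_Mart(0) = E_μ[f(X)]. Then lim_{δ→0+} (V_Mart(δ) − V_Mart(0))/δ = L*( ( Σ_{n=1}^N E_μ[ |E_μ[𝔻_n f(X) | F_n] − E_μ[𝔻_n f(X) | F_{n−1}]|^2 ] )^{1/2} ), i.e. the sensitivity equals L*(‖ᵒ𝔻f − ᵖ𝔻f‖_{L^2(μ)}), where (ᵖ𝔻f)_n = E_μ[𝔻_n f(X) | F_{n−1}] is the predictable projection. -/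

import Mathlib

open MeasureTheory Filter Set
open scoped ENNReal

noncomputable section

/-- Discrete path space `X = (ℝ^d)^N`. -/
abbrev PathD (N d : ℕ) : Type := Fin N → Fin d → ℝ

/-- The `ℓ_e` norm on `ℝ^d`. -/
def lpnorm {d : ℕ} (e : ℝ) (v : Fin d → ℝ) : ℝ := (∑ i, |v i| ^ e) ^ (1 / e)

/-- Coordinate `x_n` of a path, with the convention `x_0 = 0` (and `x_n = 0` for `n > N`). -/
def coord {N d : ℕ} (x : PathD N d) (n : ℕ) : Fin d → ℝ :=
  if h : 1 ≤ n ∧ n ≤ N then x ⟨n - 1, by omega⟩ else 0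

/-- The cost `c_N(x,y) = Σ_{n=1}^N |Δx_n − Δy_n|^p` (with `|·|` the `ℓ_p` norm). -/
def cN {N d : ℕ} (p : ℝ) (x y : PathD N d) : ℝ :=
  ∑ n ∈ Finset.Icc 1 N,
    lpnorm p ((coord x n - coord x (n - 1)) - (coord y n - coord y (n - 1))) ^ p

/-- The σ-algebra `F_n = σ(x_1, …, x_n)` on the discrete path space. -/
def Fn (N d n : ℕ) : MeasurableSpace (PathD N d) :=
  MeasurableSpace.comap (fun x (i : Fin N) => if (i : ℕ) + 1 ≤ n then x i else 0) inferInstance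

/-- Conditional independence of `m₁` and `m₂` given `m'` under `π`, expressed through
conditional expectations of indicators. -/
def CondIndepOn {Ω : Type*} [MeasurableSpace Ω] (π : Measure Ω)
    (m' m₁ m₂ : MeasurableSpace Ω) : Prop :=
  ∀ A B : Set Ω, MeasurableSet[m₁] A → MeasurableSet[m₂] B →
    (π[(A ∩ B).indicator (fun _ => (1 : ℝ)) | m']) =ᵐ[π]
      (π[A.indicator (fun _ => (1 : ℝ)) | m']) * (π[B.indicator (fun _ => (1 : ℝ)) | m'])

/-- `π` is a coupling with first marginal `μ` which is causal to its second marginal: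
for every `n`, `σ(Y_1,…,Y_n)` is conditionally independent of `σ(X_1,…,X_N)` given `F_n`. -/
def IsCausalStar {N d : ℕ} (μ : Measure (PathD N d))
    (π : Measure (PathD N d × PathD N d)) : Prop :=
  π.map Prod.fst = μ ∧
  ∀ n : ℕ, CondIndepOn π ((Fn N d n).comap Prod.fst)
    ((Fn N d n).comap Prod.snd) ((Fn N d N).comap Prod.fst)

/-- `π` is a causal coupling of `(μ, ν)`. -/
def IsCausalCoupling {N d : ℕ} (μ ν : Measure (PathD N d))
    (π : Measure (PathD N d × PathD N d)) : Prop :=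
  π.map Prod.snd = ν ∧ IsCausalStar μ π

/-- `π` is a bicausal coupling of `(μ, ν)`: both `π` and its swap are causal. -/
def IsBicausalCoupling {N d : ℕ} (μ ν : Measure (PathD N d))
    (π : Measure (PathD N d × PathD N d)) : Prop :=
  IsCausalCoupling μ ν π ∧
  (∀ n : ℕ, CondIndepOn π ((Fn N d n).comap Prod.snd)
    ((Fn N d n).comap Prod.fst) ((Fn N d N).comap Prod.snd))

/-- `μ` is a martingale measure on the discrete path space: every coordinate is integrable
and `E_μ[X_n | F_{n−1}] = X_{n−1}` a.s. (with `X_0 = 0`). -/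
def IsMartingaleMeasure {N d : ℕ} (μ : Measure (PathD N d)) : Prop :=
  ∀ n : ℕ, 1 ≤ n → n ≤ N →
    Integrable (fun x => coord x n) μ ∧
    (μ[(fun x => coord x n) | Fn N d (n - 1)]) =ᵐ[μ] (fun x => coord x (n - 1))


/-- The discrete pathwise Malliavin derivative `𝔻_n f = Σ_{k=n}^N ∂_k f`, where `∂_k f` is the
`ℝ^d`-valued partial gradient of `f` in the `k`-th coordinate block (`k = 1, …, N`). -/
def Dn {N d : ℕ} (f : PathD N d → ℝ) (n : ℕ) (x : PathD N d) : Fin d → ℝ :=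
  fun j => ∑ k : Fin N, if n ≤ (k : ℕ) + 1 then
    fderiv ℝ f x (Pi.single k (Pi.single j 1)) else 0

/-- Standing assumptions on the penalty function `L : [0,∞) → [0,∞]`:
continuous, non-decreasing, `L(0) = 0` and `liminf_{u→∞} L(u)/u^p = +∞`. -/
structure PenaltyAssumptions (p : ℝ) (L : ℝ → ℝ≥0∞) : Prop where
  cont : ContinuousOn L (Set.Ici 0)
  mono : MonotoneOn L (Set.Ici 0)
  zero : L 0 = 0
  growth : Tendsto (fun u : ℝ => L u / ENNReal.ofReal (u ^ p)) atTop (nhds ⊤)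

/-- The convex conjugate `L*(v) = sup_{u ≥ 0} { u v − L(u) }`, valued in the extended reals. -/
def Lconj (L : ℝ → ℝ≥0∞) (v : ℝ) : EReal :=
  ⨆ u : {u : ℝ // 0 ≤ u}, ((u.1 * v : ℝ) : EReal) - ((L u.1 : ℝ≥0∞) : EReal)

/-- The expected transport cost `E_π[c_N(X,Y)]` of a coupling. -/
def costD {N d : ℕ} (p : ℝ) (π : Measure (PathD N d × PathD N d)) : ℝ :=
  ∫ z, cN p z.1 z.2 ∂π

/-- The penalised causal DRO value
`V(δ) = sup_{π ∈ Π_c(μ,*), E_π[c_N] < ∞} { E_π[f(Y)] − δ L(E_π[c_N(X,Y)]^{1/p}/δ) }`,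
valued in the extended reals. -/
def VD {N d : ℕ} (p : ℝ) (L : ℝ → ℝ≥0∞) (μ : Measure (PathD N d))
    (f : PathD N d → ℝ) (δ : ℝ) : EReal :=
  ⨆ π : {π : Measure (PathD N d × PathD N d) //
      IsProbabilityMeasure π ∧ IsCausalStar μ π ∧
      Integrable (fun z => cN p z.1 z.2) π},
    ((∫ z, f z.2 ∂π.1 : ℝ) : EReal) -
      ((ENNReal.ofReal δ * L ((costD p π.1) ^ (1 / p) / δ) : ℝ≥0∞) : EReal)

/-- The `L^q(μ)`-norm `(Σ_{n=1}^N E_μ[|E_μ[𝔻_n f(X)|F_n]|_*^q])^{1/q}` of the optional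
projection of the discrete pathwise Malliavin derivative. -/
def optionalNorm {N d : ℕ} (q : ℝ) (μ : Measure (PathD N d)) (f : PathD N d → ℝ) : ℝ :=
  (∑ n ∈ Finset.Icc 1 N, ∫ x, lpnorm q ((μ[Dn f n | Fn N d n]) x) ^ q ∂μ) ^ (1 / q)

/-- The map `v(e) = (e_1|e_1|^{q−2}, …, e_d|e_d|^{q−2})` on `ℝ^d`. -/
def vmap {d : ℕ} (q : ℝ) (e : Fin d → ℝ) : Fin d → ℝ :=
  fun i => e i * |e i| ^ (q - 2)

/-- The inverse `Δ^{-1}` of the increment map: `(Δ^{-1} y)_n = Σ_{k=1}^n y_k`. -/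
def DeltaInv {N d : ℕ} (y : PathD N d) : PathD N d :=
  fun i => ∑ k : Fin N, if (k : ℕ) ≤ (i : ℕ) then y k else 0

/-- A process `h = (h_n)_{n=1}^N` is predictable if `h_n` is `F_{n−1}`-measurable. -/
def IsPredictable {N d : ℕ} (h : ℕ → PathD N d → Fin d → ℝ) : Prop :=
  ∀ n : ℕ, 1 ≤ n → n ≤ N → Measurable[Fn N d (n - 1)] (h n)

end

open MeasureTheory Filter

noncomputable section

/-- The penalised bicausal DRO value under the martingale constraint:
`V_Mart(δ) = sup { E_π[f(Y)] − δ L(E_π[c_N]^{1/p}/δ) }`, the supremum being over bicausal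
couplings `π` with first marginal `μ`, second marginal a martingale measure, and finite cost. -/
def VMartD {N d : ℕ} (p : ℝ) (L : ℝ → ℝ≥0∞) (μ : Measure (PathD N d))
    (f : PathD N d → ℝ) (δ : ℝ) : EReal :=
  ⨆ π : {π : Measure (PathD N d × PathD N d) //
      IsProbabilityMeasure π ∧ IsBicausalCoupling μ (π.map Prod.snd) π ∧
      IsMartingaleMeasure (π.map Prod.snd) ∧
      Integrable (fun z => cN p z.1 z.2) π},
    ((∫ z, f z.2 ∂π.1 : ℝ) : EReal) -
      ((ENNReal.ofReal δ * L ((costD p π.1) ^ (1 / p) / δ) : ℝ≥0∞) : EReal)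

/-!
Since the cost is quadratic, `c_N(x, y)^{1/2}` is the Euclidean norm of the displacement
`H = ΔY - ΔX`, and to first order `E_π[f(Y)] - E_μ[f(X)]` is `E_π⟪𝔻f(X), H⟫`. Causality replaces
`𝔻_n f(X)` in this pairing by `E_μ[𝔻_n f(X) | F_n]`; causality of the swapped coupling together with
the martingale property of both marginals shows that `E_μ[𝔻_n f(X) | F_{n-1}]` is orthogonal to
`H_n`. So the first-order term is `E_π⟪g(X), H⟫` with `g = ᵒ𝔻f - ᵖ𝔻f`, which Cauchy–Schwarz bounds
by `‖g‖ ‖H‖`. The bound is attained asymptotically: `g` is itself a martingale difference, and `X`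
may be displaced in the direction `g`. That coupling is causal but need not be bicausal; this is
repaired by rounding each displaced increment to a fine grid, hiding an injective encoding of the
original increment in its fractional part, and recentring by a conditional expectation. Optimising
`u ‖g‖ - L(u)` over the size `δ u` of the displacement gives `L*(‖g‖)`.
-/

open scoped InnerProductSpace Topology

section SquareIntegrable

variable {Ω E : Type*} [MeasurableSpace Ω] {π : Measure Ω} {u v : Ω → E}

theorem sq_lpNorm_two [NormedAddCommGroup E] (hu : AEStronglyMeasurable u π) :
    lpNorm u 2 π ^ 2 = ∫ ω, ‖u ω‖ ^ 2 ∂π := by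
  rw [lpNorm_eq_integral_norm_rpow_toReal two_ne_zero ENNReal.ofNat_ne_top hu]
  simp only [ENNReal.toReal_ofNat, Real.rpow_two]
  rw [← Real.rpow_mul_natCast (integral_nonneg fun _ => sq_nonneg _)]
  norm_num

theorem lpNorm_comp_of_map {Ω' : Type*} [MeasurableSpace Ω'] [NormedAddCommGroup E] {X : Ω' → Ω}
    {P : Measure Ω'} {p : ℝ≥0∞} (hX : Measurable X) (hu : AEStronglyMeasurable u (P.map X)) :
    lpNorm (u ∘ X) p P = lpNorm u p (P.map X) := by
  rw [← toReal_eLpNorm hu, ← toReal_eLpNorm (hu.comp_measurable hX),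
    eLpNorm_map_measure hu hX.aemeasurable]

variable [NormedAddCommGroup E] [InnerProductSpace ℝ E]

theorem integrable_inner_of_memLp_two (hu : MemLp u 2 π) (hv : MemLp v 2 π) :
    Integrable (fun ω => ⟪u ω, v ω⟫_ℝ) π :=
  (L2.integrable_inner (𝕜 := ℝ) hu.toLp hv.toLp).congr (by
    filter_upwards [hu.coeFn_toLp, hv.coeFn_toLp] with ω hω hω' using by rw [hω, hω'])

theorem abs_integral_inner_le (hu : MemLp u 2 π) (hv : MemLp v 2 π) :
    |∫ ω, ⟪u ω, v ω⟫_ℝ ∂π| ≤ lpNorm u 2 π * lpNorm v 2 π := by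
  have h := abs_real_inner_le_norm (hu.toLp) (hv.toLp)
  rw [L2.inner_def, Lp.norm_toLp, Lp.norm_toLp, toReal_eLpNorm hu.1, toReal_eLpNorm hv.1] at h
  rwa [integral_congr_ae (g := fun ω => ⟪hu.toLp u ω, hv.toLp v ω⟫_ℝ)]
  filter_upwards [hu.coeFn_toLp, hv.coeFn_toLp] with ω hω hω' using by rw [hω, hω']

theorem le_integral_inner_of_memLp_two (hu : MemLp u 2 π) (hv : MemLp v 2 π) (a : ℝ) :
    a * lpNorm u 2 π ^ 2 - lpNorm u 2 π * lpNorm (v - a • u) 2 π ≤ ∫ ω, ⟪u ω, v ω⟫_ℝ ∂π := by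
  have hR := hv.sub (hu.const_smul a)
  have hsplit : ∫ ω, ⟪u ω, (v - a • u) ω⟫_ℝ ∂π =
      ∫ ω, ⟪u ω, v ω⟫_ℝ ∂π - a * lpNorm u 2 π ^ 2 := by
    rw [sq_lpNorm_two hu.1, ← integral_const_mul, ← integral_sub
      (integrable_inner_of_memLp_two hu hv) (hu.norm.integrable_sq.const_mul a)]
    simp only [Pi.sub_apply, Pi.smul_apply, inner_sub_right, inner_smul_right,
      real_inner_self_eq_norm_sq]
  linarith [(abs_le.1 (abs_integral_inner_le hu hR)).1]

end SquareIntegrable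

section CondExp

variable {Ω : Type*} {m m' m₁ m₂ mΩ : MeasurableSpace Ω} {π : Measure Ω} [IsFiniteMeasure π]

theorem integral_condExp_mul_of_stronglyMeasurable (hm : m ≤ mΩ) {φ W : Ω → ℝ}
    (hW : StronglyMeasurable[m] W) (hφ : Integrable φ π) (hφW : Integrable (φ * W) π) :
    ∫ ω, (π[φ | m]) ω * W ω ∂π = ∫ ω, φ ω * W ω ∂π :=
  calc ∫ ω, (π[φ | m]) ω * W ω ∂π = ∫ ω, (π[φ * W | m]) ω ∂π :=
        integral_congr_ae (condExp_mul_of_stronglyMeasurable_right hW hφW hφ).symm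
    _ = ∫ ω, φ ω * W ω ∂π := integral_condExp hm

theorem indicator_one_mul_eq (B : Set Ω) (φ : Ω → ℝ) :
    B.indicator (fun _ => (1 : ℝ)) * φ = B.indicator φ := by
  ext ω
  simp only [Pi.mul_apply, ← indicator_mul_left, one_mul]

theorem setIntegral_eq_integral_condExp_indicator_mul (hm : m ≤ mΩ) {B : Set Ω}
    (hB : MeasurableSet B) {W : Ω → ℝ} (hWm : StronglyMeasurable[m] W) (hW : Integrable W π) :
    ∫ ω in B, W ω ∂π = ∫ ω, (π[B.indicator (fun _ => (1 : ℝ)) | m]) ω * W ω ∂π := by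
  rw [integral_condExp_mul_of_stronglyMeasurable hm hWm ((integrable_const 1).indicator hB)
    (indicator_one_mul_eq B W ▸ hW.indicator hB), ← integral_indicator hB, ← indicator_one_mul_eq]
  rfl

namespace CondIndepOn

theorem condExp_indicator_ae_eq (hci : CondIndepOn π m' m₁ m₂) (hm' : m' ≤ m₂) (hm₁ : m₁ ≤ mΩ)
    (hm₂ : m₂ ≤ mΩ) {B : Set Ω} (hB : MeasurableSet[m₁] B) :
    π[B.indicator (fun _ => (1 : ℝ)) | m'] =ᵐ[π] π[B.indicator (fun _ => (1 : ℝ)) | m₂] := by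
  have hm := hm'.trans hm₂
  refine ae_eq_condExp_of_forall_setIntegral_eq hm₂ ((integrable_const 1).indicator (hm₁ B hB))
    (fun s _ _ => integrable_condExp.integrableOn) (fun A hA _ => ?_)
    (stronglyMeasurable_condExp.mono hm').aestronglyMeasurable
  calc ∫ ω in A, (π[B.indicator (fun _ => (1 : ℝ)) | m']) ω ∂π
      = ∫ ω, (π[A.indicator (fun _ => (1 : ℝ)) | m']) ω *
          (π[B.indicator (fun _ => (1 : ℝ)) | m']) ω ∂π :=
        setIntegral_eq_integral_condExp_indicator_mul hm (hm₂ A hA) stronglyMeasurable_condExp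
          integrable_condExp
    _ = ∫ ω, (π[(B ∩ A).indicator (fun _ => (1 : ℝ)) | m']) ω ∂π := by
        refine integral_congr_ae ((hci B A hB hA).mono fun ω hω => ?_)
        simp only [hω, Pi.mul_apply, mul_comm]
    _ = ∫ ω, (B ∩ A).indicator (fun _ => (1 : ℝ)) ω ∂π := integral_condExp hm
    _ = ∫ ω in A, B.indicator (fun _ => (1 : ℝ)) ω ∂π := by
        rw [← integral_indicator (hm₂ A hA), indicator_indicator, inter_comm]

theorem condExp_condExp_ae_eq (hci : CondIndepOn π m' m₁ m₂) (hm' : m' ≤ m₂) (hm₁ : m₁ ≤ mΩ)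
    (hm₂ : m₂ ≤ mΩ) {φ : Ω → ℝ} (hφm : StronglyMeasurable[m₂] φ) (hφ : Integrable φ π) :
    π[π[φ | m'] | m₁] =ᵐ[π] π[φ | m₁] := by
  have hm := hm'.trans hm₂
  refine (ae_eq_condExp_of_forall_setIntegral_eq hm₁ integrable_condExp
    (fun s _ _ => integrable_condExp.integrableOn) (fun B hB _ => ?_)
    stronglyMeasurable_condExp.aestronglyMeasurable).symm
  have hbdd : ∀ᵐ ω ∂π, ‖(π[B.indicator (fun _ => (1 : ℝ)) | m']) ω‖ ≤ 1 :=
    ae_bdd_norm_condExp_of_ae_bdd_norm (R := 1) (ae_of_all _ fun ω =>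
      (norm_indicator_le_norm_self _ _).trans_eq (by simp))
  calc ∫ ω in B, (π[φ | m₁]) ω ∂π
      = ∫ ω in B, φ ω ∂π := setIntegral_condExp hm₁ hφ hB
    _ = ∫ ω, (π[B.indicator (fun _ => (1 : ℝ)) | m₂]) ω * φ ω ∂π :=
        setIntegral_eq_integral_condExp_indicator_mul hm₂ (hm₁ B hB) hφm hφ
    _ = ∫ ω, φ ω * (π[B.indicator (fun _ => (1 : ℝ)) | m']) ω ∂π :=
        integral_congr_ae ((hci.condExp_indicator_ae_eq hm' hm₁ hm₂ hB).mono fun ω hω => by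
          simp only [hω, mul_comm])
    _ = ∫ ω, (π[φ | m']) ω * (π[B.indicator (fun _ => (1 : ℝ)) | m']) ω ∂π :=
        (integral_condExp_mul_of_stronglyMeasurable hm stronglyMeasurable_condExp hφ
          (hφ.mul_bdd (c := 1) integrable_condExp.1 hbdd)).symm
    _ = ∫ ω, (π[B.indicator (fun _ => (1 : ℝ)) | m']) ω * (π[φ | m']) ω ∂π := by
        simp only [mul_comm]
    _ = ∫ ω in B, (π[φ | m']) ω ∂π :=
        (setIntegral_eq_integral_condExp_indicator_mul hm (hm₁ B hB) stronglyMeasurable_condExp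
          integrable_condExp).symm

theorem integral_condExp_mul (hci : CondIndepOn π m' m₁ m₂) (hm' : m' ≤ m₂) (hm₁ : m₁ ≤ mΩ)
    (hm₂ : m₂ ≤ mΩ) {φ W : Ω → ℝ} (hφm : StronglyMeasurable[m₂] φ) (hφ : Integrable φ π)
    (hWm : StronglyMeasurable[m₁] W) (hφW : Integrable (φ * W) π)
    (hφW' : Integrable (π[φ | m'] * W) π) :
    ∫ ω, (π[φ | m']) ω * W ω ∂π = ∫ ω, φ ω * W ω ∂π := by
  rw [← integral_condExp_mul_of_stronglyMeasurable hm₁ hWm hφ hφW,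
    ← integral_condExp_mul_of_stronglyMeasurable hm₁ hWm integrable_condExp hφW']
  exact integral_congr_ae ((hci.condExp_condExp_ae_eq hm' hm₁ hm₂ hφm hφ).mono fun ω hω => by
    simp only [hω])

end CondIndepOn

theorem condIndepOn_of_forall_ae_eq (hm' : m' ≤ mΩ) (hm₂ : m₂ ≤ mΩ)
    (h : ∀ A, MeasurableSet[m₁] A → ∃ A', MeasurableSet[m'] A' ∧ A =ᵐ[π] A') :
    CondIndepOn π m' m₁ m₂ := by
  intro A B hA hB
  obtain ⟨A', hA', hAA'⟩ := h A hA
  have hind : π[A.indicator (fun _ => (1 : ℝ)) | m'] =ᵐ[π] A'.indicator (fun _ => (1 : ℝ)) := by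
    rw [← condExp_of_stronglyMeasurable (μ := π) hm' (StronglyMeasurable.indicator
      (@stronglyMeasurable_const _ _ m' _ 1) hA') ((integrable_const 1).indicator (hm' A' hA'))]
    exact condExp_congr_ae (indicator_ae_eq_of_ae_eq_set hAA')
  calc π[(A ∩ B).indicator (fun _ => (1 : ℝ)) | m']
      =ᵐ[π] π[A'.indicator (B.indicator (fun _ => (1 : ℝ))) | m'] := by
        rw [← indicator_indicator]
        exact condExp_congr_ae (indicator_ae_eq_of_ae_eq_set hAA')
    _ =ᵐ[π] A'.indicator (π[B.indicator (fun _ => (1 : ℝ)) | m']) :=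
        condExp_indicator ((integrable_const 1).indicator (hm₂ B hB)) hA'
    _ =ᵐ[π] π[A.indicator (fun _ => (1 : ℝ)) | m'] * π[B.indicator (fun _ => (1 : ℝ)) | m'] := by
        rw [← indicator_one_mul_eq]
        exact hind.symm.mul (ae_eq_refl _)

theorem condExp_comp_ae_eq {E F : Type*} {n mE : MeasurableSpace E}
    [NormedAddCommGroup F] [NormedSpace ℝ F] [CompleteSpace F] {X : Ω → E} (hX : Measurable X)
    (hn : n ≤ mE) {φ : E → F} (hφ : Integrable φ (π.map X)) :
    π[φ ∘ X | n.comap X] =ᵐ[π] ((π.map X)[φ | n]) ∘ X := by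
  refine (ae_eq_condExp_of_forall_setIntegral_eq
    ((MeasurableSpace.comap_mono hn).trans hX.comap_le) (hφ.comp_measurable hX)
    (fun s _ _ => (integrable_condExp.comp_measurable hX).integrableOn) ?_
    (stronglyMeasurable_condExp.comp_measurable (comap_measurable X)).aestronglyMeasurable).symm
  rintro _ ⟨B, hB, rfl⟩ _
  calc ∫ ω in X ⁻¹' B, ((π.map X)[φ | n]) (X ω) ∂π
      = ∫ x in B, ((π.map X)[φ | n]) x ∂π.map X :=
        (setIntegral_map (hn B hB) integrable_condExp.1 hX.aemeasurable).symm
    _ = ∫ x in B, φ x ∂π.map X := setIntegral_condExp hn hφ hB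
    _ = ∫ ω in X ⁻¹' B, φ (X ω) ∂π := setIntegral_map (hn B hB) hφ.1 hX.aemeasurable

end CondExp

section PathSpace

variable {N d : ℕ}

/-- The path stopped after its first `n` coordinates and set to zero afterwards: the map that
generates `Fn N d n`. -/
def truncPath (n : ℕ) (x : PathD N d) : PathD N d := fun i => if (i : ℕ) + 1 ≤ n then x i else 0

theorem measurable_truncPath (n : ℕ) : Measurable (truncPath n : PathD N d → PathD N d) := by
  refine measurable_pi_lambda _ fun i => ?_
  unfold truncPath
  split_ifs
  exacts [measurable_pi_apply i, measurable_const]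

theorem Fn_le (n : ℕ) : Fn N d n ≤ (inferInstance : MeasurableSpace (PathD N d)) :=
  (measurable_truncPath n).comap_le

theorem measurable_Fn_of_apply_truncPath {F : Type*} [MeasurableSpace F] {n : ℕ}
    {φ : PathD N d → F} (hφ : Measurable φ) (h : ∀ x, φ (truncPath n x) = φ x) :
    Measurable[Fn N d n] φ := by
  rw [← funext h]
  exact hφ.comp (comap_measurable _)

theorem eq_of_truncPath_eq {F : Type*} [MeasurableSpace F] [MeasurableSingletonClass F] {n : ℕ}
    {φ : PathD N d → F} (hφ : Measurable[Fn N d n] φ) {x y : PathD N d}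
    (h : truncPath n x = truncPath n y) : φ x = φ y := by
  obtain ⟨B, -, hB⟩ := hφ (measurableSet_singleton (φ y))
  have hmem : ∀ z, truncPath n z ∈ B ↔ φ z = φ y := fun z => (Set.ext_iff.1 hB z)
  exact (hmem x).1 (h ▸ (hmem y).2 rfl)

theorem Fn_mono : Monotone (Fn N d) := fun m n h =>
  (measurable_Fn_of_apply_truncPath (measurable_truncPath m) fun x => by
    ext i j
    simp only [truncPath]
    split_ifs <;> first | rfl | omega).comap_le

theorem truncPath_self (x : PathD N d) : truncPath N x = x := by
  ext i j
  simp only [truncPath, Nat.succ_le_of_lt i.2, if_true]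

theorem Fn_self : Fn N d N = (inferInstance : MeasurableSpace (PathD N d)) :=
  (Fn_le N).antisymm fun _ hA => measurable_Fn_of_apply_truncPath measurable_id truncPath_self hA

theorem measurable_coord {m n : ℕ} (h : m ≤ n) :
    Measurable[Fn N d n] (fun x : PathD N d => coord x m) := by
  refine measurable_Fn_of_apply_truncPath ?_ fun x => ?_ <;> unfold coord <;> split_ifs with hm
  · exact measurable_pi_apply _
  · exact measurable_const
  · exact if_pos (by simp only; omega)
  · rfl

theorem coord_zero (x : PathD N d) : coord x 0 = 0 := dif_neg fun h => by omega

theorem coord_succ (x : PathD N d) (n : Fin N) : coord x (n + 1) = x n :=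
  dif_pos ⟨Nat.le_add_left 1 n, n.2⟩

/-- The increment map `Δ` as a linear map into the Euclidean space `ℝ^{N × d}`, in which the cost
`c_N` for `p = 2` is the squared distance. The entry `(n, j)` belongs to the (zero-based) step from
time `n` to time `n + 1`. -/
def incrementsLinear : PathD N d →ₗ[ℝ] EuclideanSpace ℝ (Fin N × Fin d) where
  toFun x := WithLp.toLp 2 fun k => coord x (k.1 + 1) k.2 - coord x k.1 k.2
  map_add' x y := by
    ext k
    simp only [coord, PiLp.add_apply]
    split_ifs <;> simp only [Pi.add_apply, Pi.zero_apply] <;> ring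
  map_smul' c x := by
    ext k
    simp only [coord, PiLp.smul_apply, smul_eq_mul, RingHom.id_apply]
    split_ifs <;> simp only [Pi.smul_apply, Pi.zero_apply, smul_eq_mul] <;> ring

theorem DeltaInv_incrementsLinear (x : PathD N d) :
    DeltaInv (fun n j => incrementsLinear x (n, j)) = x := by
  ext i j
  have hfilter : (Finset.range N).filter (· ≤ (i : ℕ)) = Finset.range (i + 1) := by
    ext n
    simp only [Finset.mem_filter, Finset.mem_range]
    omega
  calc DeltaInv (fun n j => incrementsLinear x (n, j)) i j
      = ∑ n : Fin N, if (n : ℕ) ≤ i then coord x (n + 1) j - coord x n j else 0 := by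
        simp only [DeltaInv, Finset.sum_apply, ite_apply, Pi.zero_apply]
        rfl
    _ = ∑ n ∈ Finset.range (i + 1), (coord x (n + 1) j - coord x n j) := by
        rw [Fin.sum_univ_eq_sum_range
          (fun n => if n ≤ (i : ℕ) then coord x (n + 1) j - coord x n j else 0),
          ← Finset.sum_filter, hfilter]
    _ = x i j := by
        rw [Finset.sum_range_sub (fun n => coord x n j), coord_succ, coord_zero, Pi.zero_apply,
          sub_zero]

/-- The increment map `Δ` as a continuous linear equivalence onto the Euclidean space
`ℝ^{N × d}`. -/
def increments : PathD N d ≃L[ℝ] EuclideanSpace ℝ (Fin N × Fin d) :=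
  (LinearMap.linearEquivOfInjective incrementsLinear
    (fun x y h => by rw [← DeltaInv_incrementsLinear x, h, DeltaInv_incrementsLinear])
    (by simp [Module.finrank_pi_fintype])).toContinuousLinearEquiv

theorem DeltaInv_increments (x : PathD N d) : DeltaInv (fun n j => increments x (n, j)) = x :=
  DeltaInv_incrementsLinear x

theorem increments_symm_apply (v : EuclideanSpace ℝ (Fin N × Fin d)) :
    increments.symm v = DeltaInv fun n j => v (n, j) := by
  rw [← DeltaInv_increments (increments.symm v), ContinuousLinearEquiv.apply_symm_apply]

theorem measurable_increments_apply (k : Fin N × Fin d) :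
    Measurable[Fn N d (k.1 + 1)] (fun x => increments x k) :=
  ((measurable_pi_apply k.2).comp (measurable_coord le_rfl)).sub
    ((measurable_pi_apply k.2).comp (measurable_coord (Nat.le_succ _)))

theorem truncPath_eq_iff {n : ℕ} {x y : PathD N d} :
    truncPath n x = truncPath n y ↔
      ∀ k : Fin N × Fin d, k.1 < n → increments x k = increments y k := by
  refine ⟨fun h k hk => eq_of_truncPath_eq
    ((measurable_increments_apply k).mono (Fn_mono hk) le_rfl) h, fun h => ?_⟩
  funext i
  simp only [truncPath]
  split_ifs with hi
  · rw [← DeltaInv_increments x, ← DeltaInv_increments y]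
    refine Finset.sum_congr rfl fun k _ => ?_
    split_ifs with hk
    exacts [funext fun j => h (k, j) (by simp only; omega), rfl]
  · rfl

theorem measurable_Fn_of_increments {Ω : Type*} {m : MeasurableSpace Ω} {T : Ω → PathD N d}
    {n : ℕ} (hT : ∀ k : Fin N × Fin d, k.1 < n → Measurable fun ω => increments (T ω) k) :
    Measurable[m, Fn N d n] T := by
  refine measurable_comap_iff.2 (measurable_pi_lambda _ fun i => ?_)
  simp only [Function.comp_apply]
  split_ifs with hi
  · have hT_eq : ∀ ω, T ω i = DeltaInv (fun n j => increments (T ω) (n, j)) i := fun ω =>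
      (congrFun (DeltaInv_increments (T ω)) i).symm
    simp only [hT_eq, DeltaInv]
    refine Finset.measurable_sum _ fun k _ => ?_
    split_ifs with hk
    exacts [measurable_pi_lambda _ fun j => hT (k, j) (by simp only; omega), measurable_const]
  · exact measurable_const

theorem sum_Icc_one_eq_sum_fin {M : Type*} [AddCommMonoid M] (F : ℕ → M) :
    ∑ n ∈ Finset.Icc 1 N, F n = ∑ n : Fin N, F (n + 1) := by
  rw [Fin.sum_univ_eq_sum_range (fun n => F (n + 1)), Finset.range_eq_Ico,
    Finset.sum_Ico_add' F 0 N 1]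
  rfl

theorem lpnorm_two_rpow_two (v : Fin d → ℝ) : lpnorm 2 v ^ (2 : ℝ) = ∑ j, v j ^ 2 := by
  rw [lpnorm, ← Real.rpow_mul (by positivity)]
  norm_num

theorem norm_sq_eq_sum_lpnorm (v : EuclideanSpace ℝ (Fin N × Fin d)) :
    ‖v‖ ^ 2 = ∑ n, lpnorm 2 (fun j => v (n, j)) ^ (2 : ℝ) := by
  simp only [EuclideanSpace.real_norm_sq_eq, Fintype.sum_prod_type, lpnorm_two_rpow_two]

theorem cN_two_eq (x y : PathD N d) : cN 2 x y = ‖increments y - increments x‖ ^ 2 := by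
  rw [cN, sum_Icc_one_eq_sum_fin, norm_sub_rev, norm_sq_eq_sum_lpnorm]
  rfl

end PathSpace

section Malliavin

variable {N d : ℕ} {f : PathD N d → ℝ}

/-- The discrete pathwise Malliavin derivative `(𝔻_1 f, …, 𝔻_N f)` as a vector in `ℝ^{N × d}`. -/
def malliavin (f : PathD N d → ℝ) (x : PathD N d) : EuclideanSpace ℝ (Fin N × Fin d) :=
  WithLp.toLp 2 fun k => Dn f (k.1 + 1) x k.2

theorem malliavin_apply (x : PathD N d) (k : Fin N × Fin d) :
    malliavin f x k = fderiv ℝ f x (increments.symm (EuclideanSpace.single k 1)) := by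
  have hjump : (increments.symm (EuclideanSpace.single k 1) : PathD N d) =
      ∑ i : Fin N, if (k.1 : ℕ) ≤ i then Pi.single i (Pi.single k.2 1) else 0 := by
    rw [increments_symm_apply]
    ext i j
    rw [DeltaInv, Finset.sum_apply, Finset.sum_apply, Finset.sum_apply,
      Finset.sum_eq_single_of_mem k.1 (Finset.mem_univ _),
      Finset.sum_eq_single_of_mem i (Finset.mem_univ _)]
    · split_ifs <;> simp [Pi.single_apply, Prod.ext_iff]
    · intro c _ hc
      split_ifs <;> simp [hc.symm]
    · intro c _ hc
      split_ifs <;> simp [Prod.ext_iff, hc]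
  rw [hjump, map_sum]
  simp only [malliavin, Dn, add_le_add_iff_right]
  exact Finset.sum_congr rfl fun i _ => by split_ifs <;> simp only [map_zero]

theorem fderiv_apply_eq_inner_malliavin (x h : PathD N d) :
    fderiv ℝ f x h = ⟪malliavin f x, increments h⟫_ℝ := by
  obtain ⟨v, rfl⟩ := increments.symm.surjective h
  rw [ContinuousLinearEquiv.apply_symm_apply, PiLp.inner_apply]
  conv_lhs => rw [← (EuclideanSpace.basisFun _ ℝ).sum_repr v, map_sum, map_sum]
  simp only [EuclideanSpace.basisFun_repr, EuclideanSpace.basisFun_apply, map_smul, smul_eq_mul,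
    malliavin_apply, Real.inner_apply, mul_comm]

theorem continuous_malliavin (hf : ContDiff ℝ 1 f) : Continuous (malliavin f) := by
  refine (PiLp.continuous_toLp 2 _).comp (continuous_pi fun k => ?_)
  change Continuous fun x => malliavin f x k
  simp only [malliavin_apply]
  exact (hf.continuous_fderiv one_ne_zero).clm_apply continuous_const

theorem norm_malliavin_le {C : ℝ} (hgrow : ∀ n x, lpnorm 2 (Dn f n x) ≤ C * (1 + ‖x‖))
    (x : PathD N d) : ‖malliavin f x‖ ≤ √N * C * (1 + ‖x‖) := by
  have hnn : ∀ n, 0 ≤ lpnorm 2 (Dn f n x) := fun n => by unfold lpnorm; positivity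
  have hC : 0 ≤ C * (1 + ‖x‖) := (hnn 0).trans (hgrow 0 x)
  rw [mul_assoc]
  refine abs_le_of_sq_le_sq' ?_ (by positivity) |>.2
  rw [norm_sq_eq_sum_lpnorm, mul_pow, Real.sq_sqrt (Nat.cast_nonneg N)]
  calc ∑ n : Fin N, lpnorm 2 (Dn f (n + 1) x) ^ (2 : ℝ)
      ≤ ∑ _n : Fin N, (C * (1 + ‖x‖)) ^ 2 := by
        refine Finset.sum_le_sum fun n _ => ?_
        rw [Real.rpow_two]
        exact pow_le_pow_left₀ (hnn _) (hgrow _ x) 2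
    _ = N * (C * (1 + ‖x‖)) ^ 2 := by simp

end Malliavin

section Taylor

variable {E : Type*} [NormedAddCommGroup E] [NormedSpace ℝ E] {f : E → ℝ} {K : ℝ}

theorem abs_sub_sub_fderiv_le (hf : Differentiable ℝ f) {B : ℝ} (x h : E)
    (hB : ∀ z, ‖z - x‖ ≤ ‖h‖ → ‖fderiv ℝ f z - fderiv ℝ f x‖ ≤ B) :
    |f (x + h) - f x - fderiv ℝ f x h| ≤ B * ‖h‖ := by
  have hmvt := (convex_closedBall x ‖h‖).norm_image_sub_le_of_norm_hasFDerivWithin_le'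
    (x := x) (y := x + h) (fun z _ => (hf z).hasFDerivAt.hasFDerivWithinAt)
    (fun z hz => hB z (mem_closedBall_iff_norm.1 hz))
    (Metric.mem_closedBall_self (norm_nonneg h)) (mem_closedBall_iff_norm.2 (by simp))
  rwa [add_sub_cancel_left, Real.norm_eq_abs] at hmvt

theorem nonneg_of_norm_fderiv_le (hbound : ∀ x, ‖fderiv ℝ f x‖ ≤ K * (1 + ‖x‖)) : 0 ≤ K := by
  simpa using (norm_nonneg _).trans (hbound 0)

theorem abs_sub_sub_fderiv_le_of_norm_fderiv_le (hbound : ∀ x, ‖fderiv ℝ f x‖ ≤ K * (1 + ‖x‖))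
    (hf : Differentiable ℝ f) (x h : E) :
    |f (x + h) - f x - fderiv ℝ f x h| ≤ (2 * K * (1 + ‖x‖) + K * ‖h‖) * ‖h‖ := by
  have hK := nonneg_of_norm_fderiv_le hbound
  refine abs_sub_sub_fderiv_le hf x h fun z hz => ?_
  have hzx : ‖z‖ ≤ ‖x‖ + ‖h‖ := by linarith [norm_le_norm_add_norm_sub' z x]
  calc ‖fderiv ℝ f z - fderiv ℝ f x‖ ≤ ‖fderiv ℝ f z‖ + ‖fderiv ℝ f x‖ := norm_sub_le _ _
    _ ≤ K * (1 + ‖z‖) + K * (1 + ‖x‖) := add_le_add (hbound z) (hbound x)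
    _ ≤ K * (1 + (‖x‖ + ‖h‖)) + K * (1 + ‖x‖) := by gcongr
    _ = 2 * K * (1 + ‖x‖) + K * ‖h‖ := by ring

theorem abs_le_of_norm_fderiv_le (hbound : ∀ x, ‖fderiv ℝ f x‖ ≤ K * (1 + ‖x‖))
    (hf : Differentiable ℝ f) (x : E) :
    |f x| ≤ |f 0| + K * ‖x‖ + K * ‖x‖ ^ 2 := by
  have hK := nonneg_of_norm_fderiv_le hbound
  have hmvt := (convex_closedBall (0 : E) ‖x‖).norm_image_sub_le_of_norm_fderiv_le (𝕜 := ℝ)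
    (x := 0) (y := x) (C := K * (1 + ‖x‖)) (fun z _ => hf z)
    (fun z hz => (hbound z).trans (by rw [mem_closedBall_zero_iff] at hz; gcongr))
    (Metric.mem_closedBall_self (norm_nonneg x)) (mem_closedBall_zero_iff.2 le_rfl)
  rw [sub_zero, Real.norm_eq_abs] at hmvt
  linarith [abs_sub_abs_le_abs_sub (f x) (f 0)]

theorem exists_abs_sub_sub_fderiv_le_mul_norm [ProperSpace E] (hf : ContDiff ℝ 1 f) {B : Set E}
    (hB : Bornology.IsBounded B) {ε : ℝ} (hε : 0 < ε) :
    ∃ η > 0, ∀ x ∈ B, ∀ h, ‖h‖ ≤ η → |f (x + h) - f x - fderiv ℝ f x h| ≤ ε * ‖h‖ := by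
  have huc : UniformContinuousOn (fderiv ℝ f) (Metric.cthickening 1 B) :=
    (Metric.isCompact_of_isClosed_isBounded Metric.isClosed_cthickening
      hB.cthickening).uniformContinuousOn_of_continuous
      (hf.continuous_fderiv one_ne_zero).continuousOn
  obtain ⟨η, hη, hηε⟩ := Metric.uniformContinuousOn_iff_le.1 huc ε hε
  refine ⟨min η 1, lt_min hη one_pos, fun x hx h hh => ?_⟩
  refine abs_sub_sub_fderiv_le (hf.differentiable one_ne_zero) x h fun z hz => ?_
  have hzx : dist z x ≤ min η 1 := (dist_eq_norm z x).trans_le (hz.trans hh)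
  rw [← dist_eq_norm]
  exact hηε z (Metric.mem_cthickening_of_dist_le z x 1 B hx (hzx.trans (min_le_right _ _)))
    x (Metric.self_subset_cthickening B hx) (hzx.trans (min_le_left _ _))

theorem exists_abs_sub_sub_fderiv_le_indicator [ProperSpace E] (hf : ContDiff ℝ 1 f)
    (hbound : ∀ x, ‖fderiv ℝ f x‖ ≤ K * (1 + ‖x‖)) {B : Set E} (hB : Bornology.IsBounded B)
    {ε : ℝ} (hε : 0 < ε) :
    ∃ C, 0 ≤ C ∧ ∀ x h, |f (x + h) - f x - fderiv ℝ f x h| ≤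
      ‖h‖ * (ε + 2 * K * Bᶜ.indicator (fun z => 1 + ‖z‖) x) + C * ‖h‖ ^ 2 := by
  have hK := nonneg_of_norm_fderiv_le hbound
  have hglob := abs_sub_sub_fderiv_le_of_norm_fderiv_le hbound (hf.differentiable one_ne_zero)
  obtain ⟨η, hη, hloc⟩ := exists_abs_sub_sub_fderiv_le_mul_norm hf hB hε
  obtain ⟨M, hM, hBM⟩ := hB.exists_pos_norm_le
  refine ⟨2 * K * (1 + M) / η + K, by positivity, fun x h => ?_⟩
  have hfar : 0 ≤ 2 * K * (1 + M) / η * ‖h‖ ^ 2 := by positivity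
  have hnear : 0 ≤ K * ‖h‖ ^ 2 := by positivity
  have hεh : 0 ≤ ε * ‖h‖ := by positivity
  by_cases hx : x ∈ B
  · rw [indicator_of_notMem (notMem_compl_iff.2 hx)]
    rcases le_or_gt ‖h‖ η with hh | hh
    · linarith [hloc x hx h hh]
    · have hh' : ‖h‖ ≤ ‖h‖ ^ 2 / η := by
        rw [le_div_iff₀ hη, sq]
        exact mul_le_mul_of_nonneg_left hh.le (norm_nonneg h)
      have hxM : 2 * K * (1 + ‖x‖) * ‖h‖ ≤ 2 * K * (1 + M) * (‖h‖ ^ 2 / η) := by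
        have := hBM x hx
        gcongr
      linarith [hglob x h, mul_div_assoc (2 * K * (1 + M)) (‖h‖ ^ 2) η,
        div_mul_eq_mul_div (2 * K * (1 + M)) η (‖h‖ ^ 2)]
  · rw [indicator_of_mem (mem_compl hx)]
    linarith [hglob x h]

end Taylor

section TaylorIntegral

variable {E : Type*} [NormedAddCommGroup E] [MeasurableSpace E] [BorelSpace E] {μ : Measure E}

theorem exists_isBounded_lpNorm_indicator_compl_le [IsFiniteMeasure μ] (hμ : MemLp id 2 μ) {ε : ℝ}
    (hε : 0 < ε) :
    ∃ B : Set E, Bornology.IsBounded B ∧ MemLp (Bᶜ.indicator fun z => 1 + ‖z‖) 2 μ ∧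
      lpNorm (Bᶜ.indicator fun z => 1 + ‖z‖) 2 μ ≤ ε := by
  have hgrowth : MemLp (fun z : E => 1 + ‖z‖) 2 μ := (memLp_const (1 : ℝ)).add hμ.norm
  have hmeas : Measurable fun z : E => 1 + ‖z‖ := measurable_const.add measurable_norm
  obtain ⟨M, hM⟩ := hgrowth.eLpNorm_indicator_norm_ge_le hmeas.stronglyMeasurable hε
  have hind : MemLp ({z : E | M ≤ ‖1 + ‖z‖‖₊}.indicator fun z => 1 + ‖z‖) 2 μ :=
    hgrowth.indicator (measurableSet_le measurable_const hmeas.nnnorm.coe_nnreal_real)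
  refine ⟨{z | M ≤ ‖1 + ‖z‖‖₊}ᶜ, isBounded_iff_forall_norm_le.2 ⟨M, fun z hz => ?_⟩, ?_⟩
  · have hzM : ‖1 + ‖z‖‖ < M := not_le.1 hz
    linarith [Real.le_norm_self (1 + ‖z‖)]
  · rw [compl_compl, ← toReal_eLpNorm hind.1]
    exact ⟨hind, ENNReal.toReal_le_of_le_ofReal hε.le hM⟩

variable [NormedSpace ℝ E] {f : E → ℝ} {K : ℝ}

theorem integrable_of_norm_fderiv_le [IsFiniteMeasure μ]
    (hμ : MemLp id 2 μ) (hf : Differentiable ℝ f)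
    (hbound : ∀ x, ‖fderiv ℝ f x‖ ≤ K * (1 + ‖x‖)) : Integrable f μ :=
  (((integrable_const |f 0|).add ((hμ.norm.integrable one_le_two).const_mul K)).add
    (hμ.norm.integrable_sq.const_mul K)).mono' hf.continuous.aestronglyMeasurable
    (ae_of_all _ fun x => abs_le_of_norm_fderiv_le hbound hf x)

theorem exists_memLp_abs_sub_sub_fderiv_le [ProperSpace E] [IsProbabilityMeasure μ]
    (hμ : MemLp id 2 μ) (hf : ContDiff ℝ 1 f) (hbound : ∀ x, ‖fderiv ℝ f x‖ ≤ K * (1 + ‖x‖))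
    {ε : ℝ} (hε : 0 < ε) :
    ∃ w : E → ℝ, MemLp w 2 μ ∧ lpNorm w 2 μ ≤ ε ∧ ∃ C, 0 ≤ C ∧
      ∀ x h, |f (x + h) - f x - fderiv ℝ f x h| ≤ ‖h‖ * w x + C * ‖h‖ ^ 2 := by
  have hK := nonneg_of_norm_fderiv_le hbound
  have hε' : 0 < ε / (4 * K + 1) := by positivity
  obtain ⟨B, hB, hmem, htail⟩ := exists_isBounded_lpNorm_indicator_compl_le hμ hε'
  refine ⟨_, (memLp_const (ε / 2)).add (hmem.const_mul (2 * K)), ?_,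
    exists_abs_sub_sub_fderiv_le_indicator hf hbound hB (half_pos hε)⟩
  calc lpNorm ((fun _ => ε / 2) + (2 * K) • Bᶜ.indicator fun z : E => 1 + ‖z‖) 2 μ
      ≤ lpNorm (fun _ => ε / 2) 2 μ + lpNorm ((2 * K) • Bᶜ.indicator fun z : E => 1 + ‖z‖) 2 μ :=
        lpNorm_add_le (memLp_const _) one_le_two
    _ = ε / 2 + 2 * K * lpNorm (Bᶜ.indicator fun z : E => 1 + ‖z‖) 2 μ := by
        rw [lpNorm_const' two_ne_zero ENNReal.ofNat_ne_top, lpNorm_const_smul, probReal_univ,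
          Real.one_rpow, mul_one, coe_nnnorm, Real.norm_of_nonneg (half_pos hε).le,
          Real.norm_of_nonneg (by positivity)]
    _ ≤ ε / 2 + 2 * K * (ε / (4 * K + 1)) := by gcongr
    _ ≤ ε := by
        have hdiv : (4 * K + 1) * (ε / (4 * K + 1)) = ε := mul_div_cancel₀ ε (by positivity)
        linarith

theorem exists_abs_integral_sub_sub_fderiv_le [ProperSpace E] [IsProbabilityMeasure μ]
    (hμ : MemLp id 2 μ) (hf : ContDiff ℝ 1 f) (hbound : ∀ x, ‖fderiv ℝ f x‖ ≤ K * (1 + ‖x‖))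
    {ε : ℝ} (hε : 0 < ε) :
    ∃ C, 0 ≤ C ∧ ∀ π : Measure (E × E), π.map Prod.fst = μ →
      MemLp (fun z => z.2 - z.1) 2 π →
      Integrable (fun z => f z.2 - f z.1 - fderiv ℝ f z.1 (z.2 - z.1)) π ∧
      |∫ z, (f z.2 - f z.1 - fderiv ℝ f z.1 (z.2 - z.1)) ∂π| ≤
        ε * lpNorm (fun z => z.2 - z.1) 2 π + C * lpNorm (fun z => z.2 - z.1) 2 π ^ 2 := by
  obtain ⟨w, hw, hwε, C, hC, hT⟩ := exists_memLp_abs_sub_sub_fderiv_le hμ hf hbound hε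
  refine ⟨C, hC, fun π hfst hH => ?_⟩
  have hwπ : MemLp (w ∘ Prod.fst) 2 π := (hfst ▸ hw).comp_of_map measurable_fst.aemeasurable
  have hwπε : lpNorm (w ∘ Prod.fst) 2 π ≤ ε := by
    rwa [lpNorm_comp_of_map measurable_fst (hfst ▸ hw.1), hfst]
  have hpt : ∀ z : E × E, |f z.2 - f z.1 - fderiv ℝ f z.1 (z.2 - z.1)| ≤
      ‖z.2 - z.1‖ * w z.1 + C * ‖z.2 - z.1‖ ^ 2 := fun z => by
    simpa only [add_sub_cancel] using hT z.1 (z.2 - z.1)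
  have hint₁ : Integrable (fun z : E × E => ‖z.2 - z.1‖ * w z.1) π := hH.norm.integrable_mul hwπ
  have hint₂ := hH.norm.integrable_sq.const_mul C
  have hcont : Continuous fun z : E × E => f z.2 - f z.1 - fderiv ℝ f z.1 (z.2 - z.1) :=
    ((hf.continuous.comp continuous_snd).sub (hf.continuous.comp continuous_fst)).sub
      (((hf.continuous_fderiv one_ne_zero).comp continuous_fst).clm_apply
        (continuous_snd.sub continuous_fst))
  have hR := (hint₁.add hint₂).mono' hcont.aestronglyMeasurable (ae_of_all _ hpt)
  refine ⟨hR, ?_⟩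
  have hcs : ∫ z, ‖z.2 - z.1‖ * w z.1 ∂π ≤ lpNorm (fun z => z.2 - z.1) 2 π * ε := by
    have h := abs_integral_inner_le hH.norm hwπ
    rw [lpNorm_norm hH.1] at h
    simp only [Real.inner_apply] at h
    exact (le_abs_self _).trans (h.trans (mul_le_mul_of_nonneg_left hwπε lpNorm_nonneg))
  calc |∫ z, (f z.2 - f z.1 - fderiv ℝ f z.1 (z.2 - z.1)) ∂π|
      ≤ ∫ z, |f z.2 - f z.1 - fderiv ℝ f z.1 (z.2 - z.1)| ∂π := abs_integral_le_integral_abs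
    _ ≤ ∫ z, (‖z.2 - z.1‖ * w z.1 + C * ‖z.2 - z.1‖ ^ 2) ∂π :=
        integral_mono hR.abs (hint₁.add hint₂) hpt
    _ = ∫ z, ‖z.2 - z.1‖ * w z.1 ∂π + C * lpNorm (fun z => z.2 - z.1) 2 π ^ 2 := by
        rw [integral_add hint₁ hint₂, integral_const_mul, sq_lpNorm_two hH.1]
    _ ≤ ε * lpNorm (fun z => z.2 - z.1) 2 π + C * lpNorm (fun z => z.2 - z.1) 2 π ^ 2 := by
        linarith

end TaylorIntegral

section Martingale

variable {N d : ℕ} {μ : Measure (PathD N d)}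

theorem condExp_apply_ae_eq {Ω : Type*} {m _ : MeasurableSpace Ω} {π : Measure Ω}
    {φ : Ω → Fin d → ℝ} (hφ : Integrable φ π) (j : Fin d) :
    (fun ω => (π[φ | m]) ω j) =ᵐ[π] π[fun ω => φ ω j | m] :=
  (ContinuousLinearMap.proj (R := ℝ) (φ := fun _ : Fin d => ℝ) j).comp_condExp_comm hφ

theorem condExp_increments_ae_eq [IsFiniteMeasure μ] {n : Fin N}
    (h : Integrable (fun x => coord x n) μ) (h' : Integrable (fun x => coord x (n + 1)) μ)
    (j : Fin d) :
    μ[fun x => increments x (n, j) | Fn N d n] =ᵐ[μ]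
      fun x => (μ[fun x => coord x (n + 1) | Fn N d n]) x j - coord x n j := by
  have hn : μ[fun x => coord x n j | Fn N d n] = fun x => coord x n j :=
    condExp_of_stronglyMeasurable (Fn_le _)
      ((measurable_pi_apply j).comp (measurable_coord le_rfl)).stronglyMeasurable (h.eval j)
  filter_upwards [condExp_sub (h'.eval j) (h.eval j) (Fn N d n),
    condExp_apply_ae_eq (m := Fn N d n) h' j] with x hx hx'
  rw [Pi.sub_apply, hn, ← hx'] at hx
  exact hx

theorem isMartingaleMeasure_iff [IsFiniteMeasure μ] :
    IsMartingaleMeasure μ ↔ ∀ k : Fin N × Fin d, Integrable (fun x => increments x k) μ ∧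
      μ[fun x => increments x k | Fn N d k.1] =ᵐ[μ] 0 := by
  constructor
  · intro h k
    have hint : ∀ n ≤ N, Integrable (fun x => coord x n) μ := fun n hn => by
      rcases Nat.eq_zero_or_pos n with rfl | hpos
      · simp only [coord_zero, integrable_const]
      · exact (h n hpos hn).1
    refine ⟨((hint _ k.1.2).eval k.2).sub ((hint _ k.1.2.le).eval k.2), ?_⟩
    filter_upwards [condExp_increments_ae_eq (hint _ k.1.2.le) (hint _ k.1.2) k.2,
      (h (k.1 + 1) (Nat.le_add_left 1 _) k.1.2).2] with x hx hx'
    rw [Nat.add_sub_cancel] at hx'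
    rw [hx, hx', sub_self, Pi.zero_apply]
  · intro h
    have hint : ∀ n ≤ N, Integrable (fun x => coord x n) μ := fun n hn => by
      induction n with
      | zero => simp only [coord_zero, integrable_const]
      | succ n ih =>
        refine Integrable.of_eval fun j => (((ih (Nat.le_of_succ_le hn)).eval j).add
          (h (⟨n, hn⟩, j)).1).congr (ae_of_all _ fun x => ?_)
        exact add_sub_cancel _ _
    intro n hn hnN
    obtain ⟨n, rfl⟩ := Nat.exists_eq_add_of_le' hn
    refine ⟨hint _ hnN, ?_⟩
    have hae : ∀ j : Fin d, ∀ᵐ x ∂μ,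
        (μ[fun x => coord x (n + 1) | Fn N d n]) x j = coord x n j := fun j => by
      filter_upwards [condExp_increments_ae_eq (n := ⟨n, hnN⟩) (hint n (Nat.le_of_succ_le hnN))
        (hint _ hnN) j, (h (⟨n, hnN⟩, j)).2] with x hx hx'
      exact sub_eq_zero.1 (hx.symm.trans hx')
    exact (ae_all_iff.2 hae).mono fun x hx => funext hx

/-- A square-integrable martingale difference sequence on path space: an adapted process
`D = (D_1, …, D_N)` with `E_μ[D_n | F_{n-1}] = 0`, as a random vector in `ℝ^{N × d}`. -/
structure IsMartingaleDifference (μ : Measure (PathD N d))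
    (D : PathD N d → EuclideanSpace ℝ (Fin N × Fin d)) : Prop where
  measurable (k : Fin N × Fin d) : Measurable[Fn N d (k.1 + 1)] fun x => D x k
  memLp : MemLp D 2 μ
  condExp (k : Fin N × Fin d) : μ[fun x => D x k | Fn N d k.1] =ᵐ[μ] 0

/-- The difference `ᵒG − ᵖG` of the optional and the predictable projection of a process
`G = (G_1, …, G_N)`. -/
def innovation (μ : Measure (PathD N d)) (G : PathD N d → EuclideanSpace ℝ (Fin N × Fin d))
    (x : PathD N d) : EuclideanSpace ℝ (Fin N × Fin d) :=
  WithLp.toLp 2 fun k =>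
    (μ[fun y => G y k | Fn N d (k.1 + 1)]) x - (μ[fun y => G y k | Fn N d k.1]) x

theorem isMartingaleDifference_innovation [IsFiniteMeasure μ]
    {G : PathD N d → EuclideanSpace ℝ (Fin N × Fin d)} (hG : MemLp G 2 μ) :
    IsMartingaleDifference μ (innovation μ G) where
  measurable k := stronglyMeasurable_condExp.measurable.sub
    (stronglyMeasurable_condExp.measurable.mono (Fn_mono (Nat.le_succ _)) le_rfl)
  memLp := MemLp.of_eval_piLp fun k =>
    ((hG.eval_piLp k).condExp one_le_two).sub
      ((hG.eval_piLp k).condExp one_le_two)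
  condExp k := by
    refine (condExp_sub integrable_condExp integrable_condExp _).trans ?_
    refine ((condExp_condExp_of_le (Fn_mono (Nat.le_succ _)) (Fn_le _)).sub
      (condExp_condExp_of_le le_rfl (Fn_le _))).trans ?_
    rw [sub_self]

theorem lpNorm_innovation_malliavin [IsFiniteMeasure μ] {f : PathD N d → ℝ}
    (hf : MemLp (malliavin f) 2 μ) :
    lpNorm (innovation μ (malliavin f)) 2 μ = (∑ n ∈ Finset.Icc 1 N, ∫ x,
      lpnorm 2 ((μ[Dn f n | Fn N d n]) x - (μ[Dn f n | Fn N d (n - 1)]) x) ^ (2 : ℝ) ∂μ) ^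
        (1 / 2 : ℝ) := by
  have hinn := (isMartingaleDifference_innovation hf).memLp
  have hDn : ∀ n : Fin N, Integrable (Dn f (n + 1)) μ := fun n =>
    Integrable.of_eval fun j => (hf.eval_piLp (n, j)).integrable one_le_two
  have hblock : ∀ n : Fin N, (fun x j => innovation μ (malliavin f) x (n, j)) =ᵐ[μ]
      fun x => (μ[Dn f (n + 1) | Fn N d (n + 1)]) x - (μ[Dn f (n + 1) | Fn N d n]) x := fun n => by
    have hcomp : ∀ m, ∀ᵐ x ∂μ, ∀ j, (μ[Dn f (n + 1) | m]) x j =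
        (μ[fun y => malliavin f y (n, j) | m]) x := fun m =>
      ae_all_iff.2 fun j => condExp_apply_ae_eq (hDn n) j
    filter_upwards [hcomp (Fn N d (n + 1)), hcomp (Fn N d n)] with x hx hx'
    exact funext fun j => congrArg₂ (· - ·) (hx j).symm (hx' j).symm
  rw [← Real.sqrt_eq_rpow, ← Real.sqrt_sq lpNorm_nonneg, sq_lpNorm_two hinn.1]
  congr 1
  simp only [norm_sq_eq_sum_lpnorm]
  rw [sum_Icc_one_eq_sum_fin, integral_finsetSum]
  · refine Finset.sum_congr rfl fun n _ => integral_congr_ae ((hblock n).mono fun x hx => ?_)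
    simp only [hx, Nat.add_sub_cancel]
  · intro n _
    simp only [lpnorm_two_rpow_two]
    exact integrable_finsetSum _ fun j _ => (hinn.eval_piLp (n, j)).integrable_sq

end Martingale

section Linearization

variable {N d : ℕ} {Ω : Type*} [MeasurableSpace Ω] {π : Measure Ω} [IsFiniteMeasure π]
  {X Y : Ω → PathD N d}

theorem integral_comp_mul_comp_eq (hX : Measurable X) (hY : Measurable Y) {n : ℕ} (hn : n ≤ N)
    (hci : CondIndepOn π ((Fn N d n).comap X) ((Fn N d n).comap Y) ((Fn N d N).comap X))
    {φ W : PathD N d → ℝ} (hφm : Measurable φ) (hφ : MemLp φ 2 (π.map X))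
    (hWm : Measurable[Fn N d n] W) (hW : MemLp (W ∘ Y) 2 π) :
    ∫ ω, φ (X ω) * W (Y ω) ∂π = ∫ ω, ((π.map X)[φ | Fn N d n]) (X ω) * W (Y ω) ∂π := by
  have hle {T : Ω → PathD N d} (hT : Measurable T) (m : ℕ) :
      (Fn N d m).comap T ≤ (inferInstance : MeasurableSpace Ω) :=
    (MeasurableSpace.comap_mono (Fn_le m)).trans hT.comap_le
  have hφX : MemLp (φ ∘ X) 2 π := hφ.comp_of_map hX.aemeasurable
  have hce := condExp_comp_ae_eq hX (Fn_le n) (hφ.integrable one_le_two)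
  have hφN : StronglyMeasurable[(Fn N d N).comap X] (φ ∘ X) := by
    rw [Fn_self]
    exact hφm.stronglyMeasurable.comp_measurable (comap_measurable X)
  calc ∫ ω, φ (X ω) * W (Y ω) ∂π
      = ∫ ω, (π[φ ∘ X | (Fn N d n).comap X]) ω * W (Y ω) ∂π :=
        (hci.integral_condExp_mul (MeasurableSpace.comap_mono (Fn_mono hn)) (hle hY n) (hle hX N)
          hφN (hφX.integrable one_le_two)
          (hWm.stronglyMeasurable.comp_measurable (comap_measurable Y)) (hφX.integrable_mul hW)
          ((hφX.condExp one_le_two).integrable_mul hW)).symm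
    _ = ∫ ω, ((π.map X)[φ | Fn N d n]) (X ω) * W (Y ω) ∂π :=
        integral_congr_ae (hce.mono fun ω hω => congrArg (· * W (Y ω)) hω)

theorem integral_mul_increments_eq_zero (hX : Measurable X) (hY : Measurable Y)
    (hYX : ∀ n, CondIndepOn π ((Fn N d n).comap Y) ((Fn N d n).comap X) ((Fn N d N).comap Y))
    (hmart : IsMartingaleMeasure (π.map Y)) (hYL : MemLp (fun ω => increments (Y ω)) 2 π)
    {k : Fin N × Fin d} {W : PathD N d → ℝ} (hWm : Measurable[Fn N d k.1] W)
    (hW : MemLp (W ∘ X) 2 π) :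
    ∫ ω, W (X ω) * increments (Y ω) k ∂π = 0 := by
  have hinc : Measurable fun x : PathD N d => increments x k :=
    (measurable_increments_apply k).mono (Fn_le _) le_rfl
  have hzero := ae_of_ae_map hY.aemeasurable (isMartingaleMeasure_iff.1 hmart k).2
  calc ∫ ω, W (X ω) * increments (Y ω) k ∂π
      = ∫ ω, increments (Y ω) k * W (X ω) ∂π := by simp only [mul_comm]
    _ = ∫ ω, ((π.map Y)[fun x => increments x k | Fn N d k.1]) (Y ω) * W (X ω) ∂π :=
        integral_comp_mul_comp_eq hY hX k.1.2.le (hYX k.1) hinc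
          ((memLp_map_measure_iff hinc.aestronglyMeasurable hY.aemeasurable).2
            (hYL.eval_piLp k)) hWm hW
    _ = 0 := integral_eq_zero_of_ae (hzero.mono fun ω hω => by simp [hω])

theorem integral_inner_increments_eq (hX : Measurable X) (hY : Measurable Y)
    (hXY : ∀ n, CondIndepOn π ((Fn N d n).comap X) ((Fn N d n).comap Y) ((Fn N d N).comap X))
    (hYX : ∀ n, CondIndepOn π ((Fn N d n).comap Y) ((Fn N d n).comap X) ((Fn N d N).comap Y))
    (hmart : IsMartingaleMeasure (π.map Y)) (hYL : MemLp (fun ω => increments (Y ω)) 2 π)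
    {G : PathD N d → EuclideanSpace ℝ (Fin N × Fin d)} (hGm : Measurable G)
    (hG : MemLp G 2 (π.map X)) :
    ∫ ω, ⟪G (X ω), increments (Y ω)⟫_ℝ ∂π =
      ∫ ω, ⟪innovation (π.map X) G (X ω), increments (Y ω)⟫_ℝ ∂π := by
  set μ := π.map X
  have hYk := hYL.eval_piLp
  have hGk := hG.eval_piLp
  have hpull {W : PathD N d → ℝ} (hW : MemLp W 2 μ) : MemLp (W ∘ X) 2 π :=
    hW.comp_of_map hX.aemeasurable
  have hprod {W : PathD N d → ℝ} (hW : MemLp W 2 μ) (k : Fin N × Fin d) :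
      Integrable (fun ω => W (X ω) * increments (Y ω) k) π := (hpull hW).integrable_mul (hYk k)
  have hcomp : ∀ k, ∫ ω, G (X ω) k * increments (Y ω) k ∂π =
      ∫ ω, innovation μ G (X ω) k * increments (Y ω) k ∂π := fun k => by
    simp only [innovation, sub_mul]
    rw [integral_sub (hprod ((hGk k).condExp one_le_two) k)
        (hprod ((hGk k).condExp one_le_two) k),
      integral_mul_increments_eq_zero hX hY hYX hmart hYL stronglyMeasurable_condExp.measurable
        (hpull ((hGk k).condExp one_le_two)), sub_zero]
    exact integral_comp_mul_comp_eq hX hY k.1.2 (hXY _)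
      ((measurable_pi_apply k).comp ((WithLp.measurable_ofLp ..).comp hGm)) (hGk k)
      (measurable_increments_apply k) (hYk k)
  have hinn := (isMartingaleDifference_innovation hG).memLp.eval_piLp
  simp only [PiLp.inner_apply, Real.inner_apply]
  rw [integral_finsetSum _ fun k _ => hprod (hGk k) k,
    integral_finsetSum _ fun k _ => hprod (hinn k) k]
  exact Finset.sum_congr rfl fun k _ => hcomp k

end Linearization

section Admissible

variable {N d : ℕ} {μ : Measure (PathD N d)} {π : Measure (PathD N d × PathD N d)}

/-- The displacement `ΔY − ΔX` of a coupling of path measures; for `p = 2` the cost `c_N` is its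
squared norm. -/
def displacement (z : PathD N d × PathD N d) : EuclideanSpace ℝ (Fin N × Fin d) :=
  increments z.2 - increments z.1

theorem increments_snd_sub_fst (z : PathD N d × PathD N d) :
    increments (z.2 - z.1) = displacement z := map_sub _ _ _

theorem continuous_displacement : Continuous (displacement : PathD N d × PathD N d → _) :=
  (increments.continuous.comp continuous_snd).sub (increments.continuous.comp continuous_fst)

theorem costD_two_rpow (π : Measure (PathD N d × PathD N d)) :
    costD 2 π ^ (1 / 2 : ℝ) = lpNorm displacement 2 π := by
  rw [← Real.sqrt_eq_rpow, ← Real.sqrt_sq (lpNorm_nonneg (f := displacement)),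
    sq_lpNorm_two continuous_displacement.aestronglyMeasurable]
  simp only [costD, cN_two_eq, displacement]

/-- The competitors in the definition of `VMartD` for `p = 2`: bicausal couplings of `μ` with a
martingale measure, of finite quadratic cost. -/
def IsAdmissible (μ : Measure (PathD N d)) (π : Measure (PathD N d × PathD N d)) : Prop :=
  IsProbabilityMeasure π ∧ IsBicausalCoupling μ (π.map Prod.snd) π ∧
    IsMartingaleMeasure (π.map Prod.snd) ∧ Integrable (fun z => cN 2 z.1 z.2) π

namespace IsAdmissible

theorem map_fst (hπ : IsAdmissible μ π) : π.map Prod.fst = μ := hπ.2.1.1.2.1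

theorem memLp_displacement (hπ : IsAdmissible μ π) : MemLp displacement 2 π :=
  (memLp_two_iff_integrable_sq_norm continuous_displacement.aestronglyMeasurable).2 (by
    simpa only [cN_two_eq, displacement] using hπ.2.2.2)

theorem integral_inner_displacement_eq (hπ : IsAdmissible μ π) (hmart : IsMartingaleMeasure μ)
    (hμ : MemLp id 2 μ) {G : PathD N d → EuclideanSpace ℝ (Fin N × Fin d)} (hGm : Measurable G)
    (hG : MemLp G 2 μ) :
    ∫ z, ⟪G z.1, displacement z⟫_ℝ ∂π = ∫ z, ⟪innovation μ G z.1, displacement z⟫_ℝ ∂π := by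
  obtain rfl := hπ.map_fst
  have hdisp := hπ.memLp_displacement
  obtain ⟨hprob, ⟨⟨-, -, hcausal⟩, hcausal'⟩, hmartY, -⟩ := hπ
  have hX : MemLp (fun z : PathD N d × PathD N d => increments z.1) 2 π :=
    increments.toContinuousLinearMap.comp_memLp' (hμ.comp_of_map measurable_fst.aemeasurable)
  have hY : MemLp (fun z : PathD N d × PathD N d => increments z.2) 2 π :=
    (hdisp.add hX).ae_eq (ae_of_all _ fun z => sub_add_cancel _ _)
  have hdiag (n : ℕ) : CondIndepOn π ((Fn N d n).comap Prod.fst) ((Fn N d n).comap Prod.fst)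
      ((Fn N d N).comap Prod.fst) :=
    condIndepOn_of_forall_ae_eq ((MeasurableSpace.comap_mono (Fn_le n)).trans
      measurable_fst.comap_le) ((MeasurableSpace.comap_mono (Fn_le N)).trans
      measurable_fst.comap_le) fun A hA => ⟨A, hA, ae_eq_refl _⟩
  have hGX : MemLp (fun z : PathD N d × PathD N d => G z.1) 2 π :=
    hG.comp_of_map measurable_fst.aemeasurable
  have hinnX : MemLp (fun z : PathD N d × PathD N d => innovation (π.map Prod.fst) G z.1) 2 π :=
    (isMartingaleDifference_innovation hG).memLp.comp_of_map measurable_fst.aemeasurable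
  simp only [displacement, inner_sub_right]
  rw [integral_sub (integrable_inner_of_memLp_two hGX hY) (integrable_inner_of_memLp_two hGX hX),
    integral_sub (integrable_inner_of_memLp_two hinnX hY)
      (integrable_inner_of_memLp_two hinnX hX),
    integral_inner_increments_eq measurable_fst measurable_snd hcausal hcausal' hmartY hY hGm hG,
    integral_inner_increments_eq measurable_fst measurable_fst hdiag hdiag hmart hX hGm hG]

theorem lpNorm_sub_le (hπ : IsAdmissible μ π) :
    lpNorm (fun z => z.2 - z.1) 2 π ≤
      ‖(increments (N := N) (d := d)).symm.toContinuousLinearMap‖ * lpNorm displacement 2 π := by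
  set S := (increments (N := N) (d := d)).symm.toContinuousLinearMap
  calc lpNorm (fun z => z.2 - z.1) 2 π
      ≤ lpNorm (‖S‖ • fun z => ‖displacement z‖) 2 π := by
        refine lpNorm_mono_real (hπ.memLp_displacement.norm.const_smul _) fun z => ?_
        rw [← increments.symm_apply_apply (z.2 - z.1), increments_snd_sub_fst]
        exact S.le_opNorm _
    _ = ‖S‖ * lpNorm displacement 2 π := by
        rw [lpNorm_const_smul, lpNorm_norm hπ.memLp_displacement.1, nnnorm_norm, coe_nnnorm]

theorem memLp_sub (hπ : IsAdmissible μ π) : MemLp (fun z => z.2 - z.1) 2 π :=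
  (increments.symm.toContinuousLinearMap.comp_memLp' hπ.memLp_displacement).ae_eq
    (ae_of_all _ fun z =>
      increments.symm_apply_eq.2 (increments_snd_sub_fst z).symm)

theorem integral_inner_le (hπ : IsAdmissible μ π)
    {G : PathD N d → EuclideanSpace ℝ (Fin N × Fin d)} (hG : MemLp G 2 μ) :
    ∫ z, ⟪G z.1, displacement z⟫_ℝ ∂π ≤ lpNorm G 2 μ * lpNorm displacement 2 π := by
  obtain rfl := hπ.map_fst
  have h := abs_integral_inner_le (hG.comp_of_map measurable_fst.aemeasurable)
    hπ.memLp_displacement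
  rw [lpNorm_comp_of_map measurable_fst hG.1] at h
  exact (le_abs_self _).trans h

end IsAdmissible

end Admissible

section FirstOrder

variable {N d : ℕ} {μ : Measure (PathD N d)} {f : PathD N d → ℝ} {C : ℝ}

theorem exists_norm_fderiv_le (hgrow : ∀ n x, lpnorm 2 (Dn f n x) ≤ C * (1 + ‖x‖)) :
    ∃ K, ∀ x, ‖fderiv ℝ f x‖ ≤ K * (1 + ‖x‖) := by
  set T := (increments (N := N) (d := d)).toContinuousLinearMap
  refine ⟨√N * C * ‖T‖, fun x => ?_⟩
  have hD := norm_malliavin_le hgrow x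
  have hD₀ := (norm_nonneg _).trans hD
  refine ContinuousLinearMap.opNorm_le_bound _
    ((mul_nonneg hD₀ (norm_nonneg T)).trans_eq (mul_right_comm _ _ _)) fun h => ?_
  rw [fderiv_apply_eq_inner_malliavin]
  calc ‖⟪malliavin f x, increments h⟫_ℝ‖ ≤ ‖malliavin f x‖ * ‖increments h‖ :=
        norm_inner_le_norm _ _
    _ ≤ √N * C * (1 + ‖x‖) * (‖T‖ * ‖h‖) :=
        mul_le_mul hD (T.le_opNorm h) (norm_nonneg _) hD₀
    _ = √N * C * ‖T‖ * (1 + ‖x‖) * ‖h‖ := by ring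

theorem memLp_malliavin [IsFiniteMeasure μ] (hμ : MemLp id 2 μ) (hf : ContDiff ℝ 1 f)
    (hgrow : ∀ n x, lpnorm 2 (Dn f n x) ≤ C * (1 + ‖x‖)) : MemLp (malliavin f) 2 μ := by
  have hdom : MemLp (fun x : PathD N d => √N * C * (1 + ‖x‖)) 2 μ :=
    ((memLp_const (1 : ℝ)).add hμ.norm).const_mul (√N * C)
  exact hdom.mono' (continuous_malliavin hf).aestronglyMeasurable
    (ae_of_all _ (norm_malliavin_le hgrow))

theorem IsAdmissible.integral_sub_sub_fderiv_eq [IsFiniteMeasure μ]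
    {π : Measure (PathD N d × PathD N d)}
    (hπ : IsAdmissible μ π) (hmart : IsMartingaleMeasure μ) (hμ : MemLp id 2 μ)
    (hf : ContDiff ℝ 1 f) (hgrow : ∀ n x, lpnorm 2 (Dn f n x) ≤ C * (1 + ‖x‖))
    (hrem : Integrable (fun z => f z.2 - f z.1 - fderiv ℝ f z.1 (z.2 - z.1)) π) :
    ∫ z, (f z.2 - f z.1 - fderiv ℝ f z.1 (z.2 - z.1)) ∂π = ∫ z, f z.2 ∂π - ∫ x, f x ∂μ -
      ∫ z, ⟪innovation μ (malliavin f) z.1, displacement z⟫_ℝ ∂π := by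
  obtain ⟨K, hbound⟩ := exists_norm_fderiv_le hgrow
  have hG := memLp_malliavin hμ hf hgrow
  have hGm := (continuous_malliavin hf).measurable
  have hfμ := integrable_of_norm_fderiv_le hμ (hf.differentiable one_ne_zero) hbound
  rw [← hπ.integral_inner_displacement_eq hmart hμ hGm hG]
  obtain rfl := hπ.map_fst
  have hfX : Integrable (fun z : PathD N d × PathD N d => f z.1) π :=
    hfμ.comp_measurable measurable_fst
  have hpair := integrable_inner_of_memLp_two (hG.comp_of_map measurable_fst.aemeasurable)
    hπ.memLp_displacement
  simp only [Function.comp_def] at hpair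
  simp only [fderiv_apply_eq_inner_malliavin, increments_snd_sub_fst] at hrem ⊢
  have hfY : Integrable (fun z : PathD N d × PathD N d => f z.2) π :=
    ((hrem.add hpair).add hfX).congr (ae_of_all _ fun z => by
      simp only [Pi.add_apply, sub_add_cancel])
  have hfYX : Integrable (fun z : PathD N d × PathD N d => f z.2 - f z.1) π := hfY.sub hfX
  rw [integral_sub hfYX hpair, integral_sub hfY hfX,
    integral_map measurable_fst.aemeasurable hf.continuous.aestronglyMeasurable]

theorem exists_abs_integral_sub_integral_inner_le [IsProbabilityMeasure μ]
    (hmart : IsMartingaleMeasure μ) (hμ : MemLp id 2 μ) (hf : ContDiff ℝ 1 f)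
    (hgrow : ∀ n x, lpnorm 2 (Dn f n x) ≤ C * (1 + ‖x‖)) {ε : ℝ} (hε : 0 < ε) :
    ∃ C', 0 ≤ C' ∧ ∀ π, IsAdmissible μ π →
      |∫ z, f z.2 ∂π - ∫ x, f x ∂μ -
          ∫ z, ⟪innovation μ (malliavin f) z.1, displacement z⟫_ℝ ∂π| ≤
        ε * lpNorm displacement 2 π + C' * lpNorm displacement 2 π ^ 2 := by
  obtain ⟨K, hbound⟩ := exists_norm_fderiv_le hgrow
  set M := ‖(increments (N := N) (d := d)).symm.toContinuousLinearMap‖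
  obtain ⟨C₀, hC₀, hrem⟩ := exists_abs_integral_sub_sub_fderiv_le hμ hf hbound
    (show 0 < ε / (M + 1) by positivity)
  refine ⟨C₀ * M ^ 2, by positivity, fun π hπ => ?_⟩
  obtain ⟨hint, hle⟩ := hrem π hπ.map_fst hπ.memLp_sub
  rw [hπ.integral_sub_sub_fderiv_eq hmart hμ hf hgrow hint] at hle
  set c := lpNorm displacement 2 π
  have hc : 0 ≤ c := lpNorm_nonneg
  have hcM : lpNorm (fun z => z.2 - z.1) 2 π ≤ M * c := hπ.lpNorm_sub_le
  have hM : ε / (M + 1) * M ≤ ε := by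
    rw [div_mul_eq_mul_div, div_le_iff₀ (by positivity)]
    gcongr
    linarith
  calc _ ≤ ε / (M + 1) * (M * c) + C₀ * (M * c) ^ 2 := hle.trans (by gcongr; exact lpNorm_nonneg)
    _ = ε / (M + 1) * M * c + C₀ * M ^ 2 * c ^ 2 := by ring
    _ ≤ ε * c + C₀ * M ^ 2 * c ^ 2 := by gcongr

end FirstOrder

section GraphCoupling

variable {N d : ℕ} {μ : Measure (PathD N d)} {T : PathD N d → PathD N d}

/-- A transport map of path space that is adapted together with its inverse: the first `n`
coordinates of `x` determine those of `T x` measurably, and are determined by them. -/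
structure IsBiadapted (T : PathD N d → PathD N d) : Prop where
  adapted (n : ℕ) : Measurable[Fn N d n, Fn N d n] T
  truncPath_eq {n : ℕ} {x y : PathD N d} :
    truncPath n (T x) = truncPath n (T y) → truncPath n x = truncPath n y

namespace IsBiadapted

theorem measurable (hT : IsBiadapted T) : Measurable T := by
  have h := hT.adapted N
  rw [Fn_self] at h
  exact h

/-- Lusin–Souslin: an injective Borel image is Borel, so `T` carries `F_n` onto `F_n`. -/
theorem comap_Fn (hT : IsBiadapted T) (n : ℕ) : (Fn N d n).comap T = Fn N d n := by
  refine (hT.adapted n).comap_le.antisymm fun A hA => ?_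
  have htrunc {x : PathD N d} : truncPath n (truncPath n x) = truncPath n x := by
    ext i j
    simp only [truncPath]
    split_ifs <;> rfl
  have hA_iff (x : PathD N d) : truncPath n x ∈ A ↔ x ∈ A := by
    obtain ⟨B, -, rfl⟩ := hA
    exact (congrArg (· ∈ B) htrunc).to_iff
  set S : PathD N d → PathD N d := fun x => truncPath n (T x)
  set Z : Set (PathD N d) := A ∩ {x | truncPath n x = x}
  have hZ : MeasurableSet Z :=
    (Fn_le n A hA).inter (measurableSet_eq_fun (measurable_truncPath n) measurable_id)
  have hSZ : InjOn S Z := fun x hx y hy h => by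
    rw [← hx.2, ← hy.2, hT.truncPath_eq h]
  refine ⟨truncPath n ⁻¹' (S '' Z), ⟨_, hZ.image_of_measurable_injOn
    ((measurable_truncPath n).comp hT.measurable) hSZ, rfl⟩, ext fun x => ⟨?_, fun hx => ?_⟩⟩
  · rintro ⟨y, hy, hyx⟩
    rw [← hA_iff, ← hT.truncPath_eq hyx, hA_iff]
    exact hy.1
  · exact ⟨truncPath n x, ⟨(hA_iff x).2 hx, htrunc⟩,
      eq_of_truncPath_eq (comap_measurable _ |>.comp (hT.adapted n)) htrunc⟩

end IsBiadapted

theorem measurable_graph (hT : Measurable T) : Measurable fun x => (x, T x) :=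
  measurable_id.prodMk hT

theorem ae_map_graph (hT : Measurable T) : ∀ᵐ z ∂μ.map fun x => (x, T x), z.2 = T z.1 :=
  (ae_map_iff (measurable_graph hT).aemeasurable
    (measurableSet_eq_fun measurable_snd (hT.comp measurable_fst))).2 (ae_of_all _ fun _ => rfl)

theorem map_fst_map_graph (hT : Measurable T) :
    (μ.map fun x => (x, T x)).map Prod.fst = μ :=
  (Measure.map_map measurable_fst (measurable_graph hT)).trans Measure.map_id

theorem map_snd_map_graph (hT : Measurable T) :
    (μ.map fun x => (x, T x)).map Prod.snd = μ.map T :=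
  Measure.map_map measurable_snd (measurable_graph hT)

theorem IsBiadapted.isBicausalCoupling [IsFiniteMeasure μ] (hT : IsBiadapted T) :
    IsBicausalCoupling μ (μ.map T) (μ.map fun x => (x, T x)) := by
  have hfst (n : ℕ) : (Fn N d n).comap (Prod.fst : PathD N d × PathD N d → PathD N d) ≤
      Prod.instMeasurableSpace :=
    (MeasurableSpace.comap_mono (Fn_le n)).trans measurable_fst.comap_le
  have hsnd (n : ℕ) : (Fn N d n).comap (Prod.snd : PathD N d × PathD N d → PathD N d) ≤
      Prod.instMeasurableSpace :=
    (MeasurableSpace.comap_mono (Fn_le n)).trans measurable_snd.comap_le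
  have hae := ae_map_graph (μ := μ) hT.measurable
  refine ⟨⟨map_snd_map_graph hT.measurable, map_fst_map_graph hT.measurable, fun n =>
    condIndepOn_of_forall_ae_eq (hfst n) (hfst N) ?_⟩, fun n =>
    condIndepOn_of_forall_ae_eq (hsnd n) (hsnd N) ?_⟩
  · rintro _ ⟨B, hB, rfl⟩
    exact ⟨Prod.fst ⁻¹' (T ⁻¹' B), ⟨_, hT.adapted n hB, rfl⟩,
      eventuallyEq_set.2 (hae.mono fun z hz => by simp only [mem_preimage, hz])⟩
  · rintro _ ⟨A, hA, rfl⟩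
    rw [← hT.comap_Fn n] at hA
    obtain ⟨B, hB, rfl⟩ := hA
    exact ⟨Prod.snd ⁻¹' B, ⟨B, hB, rfl⟩,
      eventuallyEq_set.2 (hae.mono fun z hz => by simp only [mem_preimage, hz])⟩

end GraphCoupling

section Perturbation

variable {N d : ℕ} {μ : Measure (PathD N d)}
  {D : PathD N d → EuclideanSpace ℝ (Fin N × Fin d)}

/-- The path whose increments are those of `x` perturbed by `D x`. -/
def perturb (D : PathD N d → EuclideanSpace ℝ (Fin N × Fin d)) (x : PathD N d) : PathD N d :=
  increments.symm (increments x + D x)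

theorem increments_perturb (x : PathD N d) : increments (perturb D x) = increments x + D x :=
  increments.apply_symm_apply _

/-- Given the past, each increment of `perturb D x` determines the same increment of `x`. -/
def IsStepInjective (D : PathD N d → EuclideanSpace ℝ (Fin N × Fin d)) : Prop :=
  ∀ (k : Fin N × Fin d) (x y : PathD N d), truncPath k.1 x = truncPath k.1 y →
    increments x k + D x k = increments y k + D y k → increments x k = increments y k

theorem IsStepInjective.isBiadapted (hinj : IsStepInjective D)
    (hD : ∀ k : Fin N × Fin d, Measurable[Fn N d (k.1 + 1)] fun x => D x k) :
    IsBiadapted (perturb D) where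
  adapted n := measurable_Fn_of_increments fun k hk => by
    simp only [increments_perturb, PiLp.add_apply]
    exact ((measurable_increments_apply k).add (hD k)).mono (Fn_mono hk) le_rfl
  truncPath_eq {n x y} h := by
    rw [truncPath_eq_iff] at h ⊢
    simp only [increments_perturb, PiLp.add_apply] at h
    have hstep : ∀ m ≤ n, ∀ k : Fin N × Fin d, k.1 < m → increments x k = increments y k := by
      intro m
      induction m with
      | zero => exact fun _ k hk => absurd hk (Nat.not_lt_zero _)
      | succ m ih =>
        intro hm k hk
        exact hinj k x y (truncPath_eq_iff.2 fun l hl => ih (Nat.le_of_succ_le hm) l (by omega))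
          (h k (by omega))
    exact hstep n le_rfl

theorem IsMartingaleDifference.isMartingaleMeasure_map_perturb [IsFiniteMeasure μ]
    (hD : IsMartingaleDifference μ D) (hinj : IsStepInjective D) (hmart : IsMartingaleMeasure μ) :
    IsMartingaleMeasure (μ.map (perturb D)) := by
  have hT := hinj.isBiadapted hD.measurable
  refine isMartingaleMeasure_iff.2 fun k => ?_
  obtain ⟨hinc, hinc₀⟩ := isMartingaleMeasure_iff.1 hmart k
  have hDk := (hD.memLp.eval_piLp k).integrable one_le_two
  have hcomp : (fun x => increments x k) ∘ perturb D = fun x => increments x k + D x k := by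
    ext x
    simp only [Function.comp_apply, increments_perturb, PiLp.add_apply]
  have hint : Integrable (fun x => increments x k) (μ.map (perturb D)) := by
    rw [integrable_map_measure ((measurable_increments_apply k).mono (Fn_le _)
      le_rfl).aestronglyMeasurable hT.measurable.aemeasurable, hcomp]
    exact hinc.add hDk
  refine ⟨hint, (ae_map_iff hT.measurable.aemeasurable (measurableSet_eq_fun
    (stronglyMeasurable_condExp.measurable.mono (Fn_le _) le_rfl) measurable_const)).2 ?_⟩
  have hce := condExp_comp_ae_eq hT.measurable (Fn_le k.1) hint
  rw [hT.comap_Fn, hcomp] at hce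
  filter_upwards [hce, condExp_add hinc hDk (Fn N d k.1), hinc₀, hD.condExp k] with x h h' h₁ h₂
  exact h.symm.trans (h'.trans ((congrArg₂ (· + ·) h₁ h₂).trans (add_zero 0)))

theorem IsMartingaleDifference.exists_isAdmissible [IsProbabilityMeasure μ]
    (hD : IsMartingaleDifference μ D) (hinj : IsStepInjective D) (hmart : IsMartingaleMeasure μ) :
    ∃ π, IsAdmissible μ π ∧ lpNorm displacement 2 π = lpNorm D 2 μ ∧
      ∀ G, MemLp G 2 μ → ∫ z, ⟪G z.1, displacement z⟫_ℝ ∂π = ∫ x, ⟪G x, D x⟫_ℝ ∂μ := by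
  have hT := hinj.isBiadapted hD.measurable
  have hgraph := measurable_graph hT.measurable
  have hdisp : displacement ∘ (fun x => (x, perturb D x)) = D := by
    ext x : 1
    simp only [displacement, Function.comp_apply, increments_perturb, add_sub_cancel_left]
  have hmemLp : MemLp displacement 2 (μ.map fun x => (x, perturb D x)) := by
    rw [memLp_map_measure_iff continuous_displacement.aestronglyMeasurable hgraph.aemeasurable,
      hdisp]
    exact hD.memLp
  refine ⟨μ.map fun x => (x, perturb D x), ⟨Measure.isProbabilityMeasure_map hgraph.aemeasurable,
    ?_, ?_, ?_⟩, ?_, fun G hG => ?_⟩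
  · rw [map_snd_map_graph hT.measurable]
    exact hT.isBicausalCoupling
  · rw [map_snd_map_graph hT.measurable]
    exact hD.isMartingaleMeasure_map_perturb hinj hmart
  · simp only [cN_two_eq]
    exact hmemLp.norm.integrable_sq
  · rw [← lpNorm_comp_of_map hgraph continuous_displacement.aestronglyMeasurable, hdisp]
  · rw [← map_fst_map_graph (μ := μ) hT.measurable] at hG
    have hint := integrable_inner_of_memLp_two (hG.comp_of_map measurable_fst.aemeasurable) hmemLp
    simp only [Function.comp_apply] at hint
    rw [integral_map hgraph.aemeasurable hint.1]
    exact integral_congr_ae (ae_of_all _ fun x => congrArg (⟪G x, ·⟫_ℝ) (congrFun hdisp x))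

end Perturbation

section Quantization

variable {N d : ℕ} {μ : Measure (PathD N d)}
  {g h : PathD N d → EuclideanSpace ℝ (Fin N × Fin d)} {e : ℝ}

/-- The value `v` rounded to the grid `e ℤ`, its fractional part being replaced by an injective
encoding of `t`. -/
def encode (e v t : ℝ) : ℝ := e * (⌊v / e⌋ + Real.sigmoid t)

theorem abs_encode_sub_le (he : 0 < e) (v t : ℝ) : |encode e v t - v| ≤ e := by
  have hv : encode e v t - v = e * (Real.sigmoid t - Int.fract (v / e)) := by
    rw [encode, Int.fract]
    field_simp
    ring
  rw [hv, abs_mul, abs_of_pos he]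
  refine mul_le_of_le_one_right he.le (abs_le.2 ⟨?_, ?_⟩) <;>
    linarith [Real.sigmoid_pos t, Real.sigmoid_lt_one t, Int.fract_nonneg (v / e),
      Int.fract_lt_one (v / e)]

theorem eq_of_encode_eq (he : e ≠ 0) {v t w s : ℝ} (h : encode e v t = encode e w s) : t = s := by
  have hfract (r : ℝ) : Int.fract (Real.sigmoid r) = Real.sigmoid r :=
    Int.fract_eq_self.2 ⟨(Real.sigmoid_pos r).le, Real.sigmoid_lt_one r⟩
  have hsig := congrArg Int.fract (mul_left_cancel₀ he h)
  rw [Int.fract_intCast_add, Int.fract_intCast_add, hfract, hfract] at hsig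
  exact Real.sigmoid_strictMono.injective hsig

theorem measurable_encode (e : ℝ) : Measurable fun z : ℝ × ℝ => encode e z.1 z.2 :=
  ((measurable_from_top.comp (Int.measurable_floor.comp (measurable_fst.div_const e))).add
    (Real.sigmoid_strictMono.monotone.measurable.comp measurable_snd)).const_mul e

/-- An approximation of the perturbation `h` of the increments, chosen so that every perturbed
increment encodes the original one. -/
def quantize (e : ℝ) (h : PathD N d → EuclideanSpace ℝ (Fin N × Fin d)) (x : PathD N d) :
    EuclideanSpace ℝ (Fin N × Fin d) :=
  WithLp.toLp 2 fun k => encode e (increments x k + h x k) (increments x k) - increments x k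

theorem measurable_quantize_apply {k : Fin N × Fin d}
    (hh : Measurable[Fn N d (k.1 + 1)] fun x => h x k) :
    Measurable[Fn N d (k.1 + 1)] fun x => quantize e h x k :=
  ((measurable_encode e).comp (((measurable_increments_apply k).add hh).prodMk
    (measurable_increments_apply k))).sub (measurable_increments_apply k)

theorem abs_quantize_sub_le (he : 0 < e) (x : PathD N d) (k : Fin N × Fin d) :
    |quantize e h x k - h x k| ≤ e := by
  have henc := abs_encode_sub_le he (increments x k + h x k) (increments x k)
  rwa [← sub_sub] at henc

theorem memLp_quantize [IsFiniteMeasure μ] (he : 0 < e)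
    (hh : ∀ k : Fin N × Fin d, Measurable[Fn N d (k.1 + 1)] fun x => h x k) (hh₂ : MemLp h 2 μ) :
    MemLp (quantize e h) 2 μ :=
  MemLp.of_eval_piLp fun k => by
    have hdiff : MemLp (fun x => quantize e h x k - h x k) 2 μ :=
      MemLp.of_bound (((measurable_quantize_apply (hh k)).sub (hh k)).mono (Fn_le _)
        le_rfl).aestronglyMeasurable e (ae_of_all _ fun x => abs_quantize_sub_le he x k)
    simpa only [Pi.add_def, sub_add_cancel] using hdiff.add (hh₂.eval_piLp k)

theorem innovation_apply_of_adapted [IsFiniteMeasure μ] (hg : MemLp g 2 μ) {k : Fin N × Fin d}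
    (hgk : Measurable[Fn N d (k.1 + 1)] fun x => g x k) (x : PathD N d) :
    innovation μ g x k = g x k - (μ[fun y => g y k | Fn N d k.1]) x :=
  congrArg (· - _) (congrFun (condExp_of_stronglyMeasurable (Fn_le _) hgk.stronglyMeasurable
    ((hg.eval_piLp k).integrable one_le_two)) x)

theorem isStepInjective_innovation_quantize [IsFiniteMeasure μ] (he : 0 < e)
    (hh : ∀ k : Fin N × Fin d, Measurable[Fn N d (k.1 + 1)] fun x => h x k) (hh₂ : MemLp h 2 μ) :
    IsStepInjective (innovation μ (quantize e h)) := fun k x y hxy hinc => by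
  have hpast : (μ[fun z => quantize e h z k | Fn N d k.1]) x =
      (μ[fun z => quantize e h z k | Fn N d k.1]) y :=
    eq_of_truncPath_eq stronglyMeasurable_condExp.measurable hxy
  simp only [innovation_apply_of_adapted (memLp_quantize he hh hh₂)
    (measurable_quantize_apply (hh k)), hpast] at hinc
  refine eq_of_encode_eq he.ne' (v := increments x k + h x k) (w := increments y k + h y k) ?_
  simp only [quantize] at hinc
  linarith

theorem IsMartingaleDifference.ae_abs_innovation_sub_le [IsFiniteMeasure μ]
    (hh : IsMartingaleDifference μ h) (hg : MemLp g 2 μ) {k : Fin N × Fin d}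
    (hgk : Measurable[Fn N d (k.1 + 1)] fun x => g x k) (hgh : ∀ᵐ x ∂μ, |g x k - h x k| ≤ e) :
    ∀ᵐ x ∂μ, |innovation μ g x k - h x k| ≤ 2 * e := by
  have hbdd : ∀ᵐ x ∂μ, ‖(μ[(fun y => g y k) - fun y => h y k | Fn N d k.1]) x‖ ≤ e :=
    ae_bdd_norm_condExp_of_ae_bdd_norm hgh
  filter_upwards [hgh, hbdd, hh.condExp k, condExp_sub ((hg.eval_piLp k).integrable one_le_two)
    ((hh.memLp.eval_piLp k).integrable one_le_two) (Fn N d k.1)] with x hx hce hh₀ hsub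
  rw [hsub, Pi.sub_apply, hh₀, Pi.zero_apply, sub_zero, Real.norm_eq_abs] at hce
  rw [innovation_apply_of_adapted hg hgk, sub_right_comm, two_mul]
  exact (abs_sub _ _).trans (add_le_add hx hce)

theorem lpNorm_two_le_of_ae_abs_le {ι : Type*} [Fintype ι] {Ω : Type*} [MeasurableSpace Ω]
    {π : Measure Ω} [IsProbabilityMeasure π] {u : Ω → EuclideanSpace ℝ ι} (hu : MemLp u 2 π)
    (he : 0 ≤ e) (h : ∀ i, ∀ᵐ ω ∂π, |u ω i| ≤ e) : lpNorm u 2 π ≤ √(Fintype.card ι) * e := by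
  have hnorm : ∀ᵐ ω ∂π, ‖u ω‖ ^ 2 ≤ Fintype.card ι * e ^ 2 := by
    filter_upwards [ae_all_iff.2 h] with ω hω
    rw [EuclideanSpace.norm_sq_eq, ← nsmul_eq_mul, ← Finset.card_univ]
    exact Finset.sum_le_card_nsmul _ _ _ fun i _ => pow_le_pow_left₀ (norm_nonneg _) (hω i) 2
  refine le_of_sq_le_sq ?_ (by positivity)
  calc lpNorm u 2 π ^ 2 = ∫ ω, ‖u ω‖ ^ 2 ∂π := sq_lpNorm_two hu.1
    _ ≤ ∫ _, Fintype.card ι * e ^ 2 ∂π :=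
      integral_mono_ae hu.norm.integrable_sq (integrable_const _) hnorm
    _ = (√(Fintype.card ι) * e) ^ 2 := by
      rw [integral_const, probReal_univ, one_smul, mul_pow, Real.sq_sqrt (Nat.cast_nonneg _)]

theorem IsMartingaleDifference.exists_isStepInjective_lpNorm_sub_le [IsProbabilityMeasure μ]
    (hh : IsMartingaleDifference μ h) {κ : ℝ} (hκ : 0 < κ) :
    ∃ D, IsMartingaleDifference μ D ∧ IsStepInjective D ∧ lpNorm (D - h) 2 μ ≤ κ := by
  set M : ℝ := √(Fintype.card (Fin N × Fin d))
  set e : ℝ := κ / (2 * (M + 1))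
  have he : 0 < e := by positivity
  have hq := memLp_quantize he hh.measurable hh.memLp
  have hD := isMartingaleDifference_innovation hq
  refine ⟨_, hD, isStepInjective_innovation_quantize he hh.measurable hh.memLp, ?_⟩
  calc lpNorm (innovation μ (quantize e h) - h) 2 μ ≤ M * (2 * e) :=
        lpNorm_two_le_of_ae_abs_le (hD.memLp.sub hh.memLp) (by positivity) fun k =>
          hh.ae_abs_innovation_sub_le hq (measurable_quantize_apply (hh.measurable k))
            (ae_of_all _ fun x => abs_quantize_sub_le he x k)
    _ = M / (M + 1) * κ := by simp only [e]; field_simp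
    _ ≤ κ := mul_le_of_le_one_left hκ.le (div_le_one_of_le₀ (by linarith) (by positivity))

theorem IsMartingaleDifference.const_smul (hh : IsMartingaleDifference μ h) (a : ℝ) :
    IsMartingaleDifference μ (a • h) where
  measurable k := (hh.measurable k).const_mul a
  memLp := hh.memLp.const_smul a
  condExp k := (condExp_smul a _ _).trans ((hh.condExp k).const_smul a |>.trans
    (Eq.eventuallyEq (smul_zero a)))

theorem isStepInjective_zero :
    IsStepInjective (0 : PathD N d → EuclideanSpace ℝ (Fin N × Fin d)) := fun k x y _ hinc => by
  simpa only [Pi.zero_apply, PiLp.zero_apply, add_zero] using hinc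

theorem isMartingaleDifference_zero : IsMartingaleDifference μ 0 where
  measurable _ := measurable_const
  memLp := MemLp.zero
  condExp _ := by
    simp only [Pi.zero_apply, PiLp.zero_apply]
    exact (condExp_zero (m := _)).eventuallyEq

theorem IsMartingaleDifference.exists_isStepInjective_ge [IsProbabilityMeasure μ]
    (hg : IsMartingaleDifference μ g) {t ε : ℝ} (ht : 0 ≤ t) (hε : 0 < ε) :
    ∃ D, IsMartingaleDifference μ D ∧ IsStepInjective D ∧ lpNorm D 2 μ ≤ t ∧
      t * lpNorm g 2 μ - ε ≤ ∫ x, ⟪g x, D x⟫_ℝ ∂μ := by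
  set A := lpNorm g 2 μ
  have hA₀ : 0 ≤ A := lpNorm_nonneg
  rcases le_or_gt (t * A) ε with htA | htA
  · refine ⟨0, isMartingaleDifference_zero, isStepInjective_zero, ?_, ?_⟩
    · rwa [lpNorm_zero]
    · simp only [Pi.zero_apply, inner_zero_right, integral_zero]
      exact sub_nonpos.2 htA
  have hA : 0 < A := pos_of_mul_pos_right (hε.trans htA) ht
  set θ := ε / (2 * A)
  have hθ : θ ≤ t := (div_le_iff₀ (by positivity)).2 (by linarith)
  obtain ⟨D, hD, hinj, hDg⟩ := (hg.const_smul ((t - θ) / A)).exists_isStepInjective_lpNorm_sub_le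
    (show 0 < θ by positivity)
  refine ⟨D, hD, hinj, ?_, ?_⟩
  · calc lpNorm D 2 μ
        ≤ lpNorm (((t - θ) / A) • g) 2 μ + lpNorm (D - ((t - θ) / A) • g) 2 μ := by
          conv_lhs => rw [← add_sub_cancel (((t - θ) / A) • g) D]
          exact lpNorm_add_le (hg.const_smul _).memLp one_le_two
      _ ≤ (t - θ) / A * A + θ := by
        refine add_le_add (le_of_eq ?_) hDg
        rw [lpNorm_const_smul, coe_nnnorm,
          Real.norm_of_nonneg (div_nonneg (sub_nonneg.2 hθ) hA₀)]
      _ = t := by field_simp; ring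
  · calc t * A - ε = (t - θ) / A * A ^ 2 - A * θ := by simp only [θ]; field_simp; ring
      _ ≤ (t - θ) / A * A ^ 2 - A * lpNorm (D - ((t - θ) / A) • g) 2 μ := by gcongr
      _ ≤ ∫ x, ⟪g x, D x⟫_ℝ ∂μ := le_integral_inner_of_memLp_two hg.memLp hD.memLp _

theorem exists_isAdmissible_ge [IsProbabilityMeasure μ] (hmart : IsMartingaleMeasure μ)
    (hg : IsMartingaleDifference μ g) {t ε : ℝ} (ht : 0 ≤ t) (hε : 0 < ε) :
    ∃ π, IsAdmissible μ π ∧ lpNorm displacement 2 π ≤ t ∧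
      t * lpNorm g 2 μ - ε ≤ ∫ z, ⟪g z.1, displacement z⟫_ℝ ∂π := by
  obtain ⟨D, hD, hinj, hDt, hDg⟩ := hg.exists_isStepInjective_ge ht hε
  obtain ⟨π, hπ, hnorm, hinner⟩ := hD.exists_isAdmissible hinj hmart
  exact ⟨π, hπ, hnorm.trans_le hDt, hDg.trans_eq (hinner g hg.memLp).symm⟩

end Quantization

section PenalisedSupremum

variable {ι : Type*} {L : ℝ → ℝ≥0∞} {E B c : ι → ℝ} {A E₀ κ : ℝ}

/-- The value `V(δ) = sup_i {E_i − L_δ(c_i)}` of a maximisation problem with objective `E` in which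
the cost `c` is penalised by `L_δ = δ L(·/δ)`. -/
def penalisedSup (L : ℝ → ℝ≥0∞) (E c : ι → ℝ) (δ : ℝ) : EReal :=
  ⨆ i, (E i : EReal) - ((ENNReal.ofReal δ * L (c i / δ) : ℝ≥0∞) : EReal)

theorem coe_sub_ofReal_mul {δ : ℝ} (hδ : 0 ≤ δ) (x : ℝ) {l : ℝ≥0∞} (hl : l ≠ ⊤) :
    (x : EReal) - ((ENNReal.ofReal δ * l : ℝ≥0∞) : EReal) = (x - δ * l.toReal : ℝ) := by
  rw [← EReal.coe_ennreal_toReal (ENNReal.mul_ne_top ENNReal.ofReal_ne_top hl), ENNReal.toReal_mul,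
    ENNReal.toReal_ofReal hδ, ← EReal.coe_sub]

theorem coe_sub_ofReal_mul_le {δ x y : ℝ} (hδ : 0 < δ) {l : ℝ≥0∞}
    (h : l ≠ ⊤ → x - δ * l.toReal ≤ y) :
    (x : EReal) - ((ENNReal.ofReal δ * l : ℝ≥0∞) : EReal) ≤ y := by
  rcases eq_or_ne l ⊤ with rfl | hl
  · rw [ENNReal.mul_top (ENNReal.ofReal_pos.2 hδ).ne', EReal.coe_ennreal_top, EReal.sub_top]
    exact bot_le
  · rw [coe_sub_ofReal_mul hδ.le x hl]
    exact EReal.coe_le_coe (h hl)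

theorem le_inv_mul_sub_of_add_mul_le {δ b x : ℝ} (hδ : 0 < δ) {V : EReal}
    (hV : ((x + δ * b : ℝ) : EReal) ≤ V) : (b : EReal) ≤ (1 / δ : ℝ) * (V - x) := by
  induction V with
  | bot => exact (hV.not_gt (EReal.bot_lt_coe _)).elim
  | top =>
    rw [EReal.top_sub_coe, EReal.coe_mul_top_of_pos (one_div_pos.2 hδ)]
    exact le_top
  | coe v =>
    rwa [← EReal.coe_sub, ← EReal.coe_mul, EReal.coe_le_coe_iff, one_div_mul_eq_div,
      le_div_iff₀' hδ, le_sub_iff_add_le', ← EReal.coe_le_coe_iff]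

theorem inv_mul_sub_le_of_le_add_mul {δ b x : ℝ} (hδ : 0 < δ) {V : EReal}
    (hV : V ≤ ((x + δ * b : ℝ) : EReal)) : ((1 / δ : ℝ) : EReal) * (V - x) ≤ b := by
  induction V with
  | bot =>
    rw [EReal.bot_sub, EReal.coe_mul_bot_of_pos (one_div_pos.2 hδ)]
    exact bot_le
  | top => exact (hV.not_gt (EReal.coe_lt_top _)).elim
  | coe v =>
    rwa [← EReal.coe_sub, ← EReal.coe_mul, EReal.coe_le_coe_iff, one_div_mul_eq_div,
      div_le_iff₀' hδ, sub_le_iff_le_add', ← EReal.coe_le_coe_iff]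

theorem sub_toReal_le_of_Lconj_le {b u : ℝ} (hb : Lconj L A ≤ b) (hu : 0 ≤ u) (hLu : L u ≠ ⊤) :
    u * A - (L u).toReal ≤ b := by
  have h := (le_iSup (fun u : {u : ℝ // 0 ≤ u} => ((u.1 * A : ℝ) : EReal) - (L u.1 : EReal))
    ⟨u, hu⟩).trans hb
  rwa [← EReal.coe_ennreal_toReal hLu, ← EReal.coe_sub, EReal.coe_le_coe_iff] at h

theorem exists_lt_sub_toReal_of_lt_Lconj {b : ℝ} (hb : (b : EReal) < Lconj L A) :
    ∃ u, 0 ≤ u ∧ L u ≠ ⊤ ∧ b < u * A - (L u).toReal := by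
  obtain ⟨⟨u, hu⟩, hbu⟩ := lt_iSup_iff.1 hb
  have hLu : L u ≠ ⊤ := fun h => by
    rw [h, EReal.coe_ennreal_top, EReal.sub_top] at hbu
    exact not_lt_bot hbu
  rw [← EReal.coe_ennreal_toReal hLu, ← EReal.coe_sub, EReal.coe_lt_coe_iff] at hbu
  exact ⟨u, hu, hLu, hbu⟩

theorem eventually_mul_add_mul_sq_le (a b : ℝ) (hκ : κ < 0) :
    ∀ᶠ u in atTop, a * u + κ * u ^ 2 ≤ b := by
  have h : Tendsto (fun u : ℝ => u * (a + κ * u)) atTop atBot :=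
    tendsto_id.atTop_mul_atBot₀
      (tendsto_atBot_add_const_left _ _ (tendsto_id.const_mul_atTop_of_neg hκ))
  exact (h.eventually_le_atBot b).mono fun u hu => by linarith

theorem tendsto_mul_mul_nhdsGT_zero (C s : ℝ) :
    Tendsto (fun δ : ℝ => C * δ * s) (𝓝[>] 0) (𝓝 0) := by
  have h : Continuous fun δ : ℝ => C * δ * s := by fun_prop
  simpa only [mul_zero, zero_mul] using (h.tendsto 0).mono_left nhdsWithin_le_nhds

theorem exists_eventually_add_mul_sub_toReal_le (hκ : 0 < κ)
    (hgrowth : ∀ᶠ u in atTop, ENNReal.ofReal (κ * u ^ 2) ≤ L u) {a b : ℝ} (ha : Lconj L A ≤ a)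
    (hab : a < b) :
    ∃ η > 0, ∀ C, 0 ≤ C → ∀ᶠ δ in 𝓝[>] (0 : ℝ), ∀ u, 0 ≤ u → L u ≠ ⊤ →
      (A + η) * u + C * δ * u ^ 2 - (L u).toReal ≤ b := by
  obtain ⟨U, hU⟩ := eventually_atTop.1 ((eventually_ge_atTop 0).and
    (hgrowth.and (eventually_mul_add_mul_sq_le (A + 1) b (show -(κ / 2) < 0 by linarith))))
  have hU₀ : 0 ≤ U := (hU U le_rfl).1
  set η := min 1 ((b - a) / (2 * (U + 1)))
  have hη₀ : 0 < η := lt_min one_pos (div_pos (sub_pos.2 hab) (by positivity))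
  have hηU : η * U ≤ (b - a) / 2 := by
    have h := (le_div_iff₀ (by positivity)).1 (min_le_right 1 ((b - a) / (2 * (U + 1))))
    linarith
  refine ⟨η, hη₀, fun C hC => ?_⟩
  filter_upwards [self_mem_nhdsWithin,
    (tendsto_mul_mul_nhdsGT_zero C (U ^ 2)).eventually_le_const (half_pos (sub_pos.2 hab)),
    (tendsto_mul_mul_nhdsGT_zero C 1).eventually_le_const (half_pos hκ)]
    with δ (hδ : 0 < δ) hsmall hlarge u hu₀ hLu
  rcases le_total u U with huU | huU
  · have hηu : η * u ≤ η * U := by gcongr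
    have hCu : C * δ * u ^ 2 ≤ C * δ * U ^ 2 := by gcongr
    linarith [sub_toReal_le_of_Lconj_le ha hu₀ hLu]
  · obtain ⟨-, hLκ, hlin⟩ := hU u huU
    have hLκ := (ENNReal.ofReal_le_iff_le_toReal hLu).1 hLκ
    have hηu : η * u ≤ 1 * u := by gcongr; exact min_le_left _ _
    have hCu : C * δ * 1 * u ^ 2 ≤ κ / 2 * u ^ 2 := by gcongr
    linarith

theorem eventually_penalisedSup_le (hκ : 0 < κ)
    (hgrowth : ∀ᶠ u in atTop, ENNReal.ofReal (κ * u ^ 2) ≤ L u) (hc : ∀ i, 0 ≤ c i)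
    (hE : ∀ ε > 0, ∃ C, 0 ≤ C ∧ ∀ i, |E i - E₀ - B i| ≤ ε * c i + C * c i ^ 2)
    (hB : ∀ i, B i ≤ A * c i) {a b : ℝ} (ha : Lconj L A ≤ a) (hab : a < b) :
    ∀ᶠ δ in 𝓝[>] (0 : ℝ), penalisedSup L E c δ ≤ (E₀ + δ * b : ℝ) := by
  obtain ⟨η, hη, hkey⟩ := exists_eventually_add_mul_sub_toReal_le hκ hgrowth ha hab
  obtain ⟨C, hC, hE⟩ := hE η hη
  filter_upwards [self_mem_nhdsWithin, hkey C hC] with δ (hδ : 0 < δ) hkey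
  refine iSup_le fun i => coe_sub_ofReal_mul_le hδ fun hLu => ?_
  obtain ⟨u, hu⟩ : ∃ u, c i = δ * u := ⟨c i / δ, (mul_div_cancel₀ _ hδ.ne').symm⟩
  have hu₀ : 0 ≤ u := nonneg_of_mul_nonneg_right (hu ▸ hc i) hδ
  rw [hu, mul_div_cancel_left₀ _ hδ.ne'] at hLu ⊢
  have hEi := (abs_le.1 (hE i)).2
  have hBi := hB i
  rw [hu] at hEi hBi
  linarith [mul_le_mul_of_nonneg_left (hkey u hu₀ hLu) hδ.le]

theorem eventually_le_penalisedSup (hmono : MonotoneOn L (Ici 0)) (hc : ∀ i, 0 ≤ c i)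
    (hE : ∀ ε > 0, ∃ C, 0 ≤ C ∧ ∀ i, |E i - E₀ - B i| ≤ ε * c i + C * c i ^ 2)
    (hB : ∀ t, 0 ≤ t → ∀ ε > 0, ∃ i, c i ≤ t ∧ t * A - ε ≤ B i)
    {b : ℝ} (hb : (b : EReal) < Lconj L A) :
    ∀ᶠ δ in 𝓝[>] (0 : ℝ), ((E₀ + δ * b : ℝ) : EReal) ≤ penalisedSup L E c δ := by
  obtain ⟨u, hu, hLu, hbu⟩ := exists_lt_sub_toReal_of_lt_Lconj hb
  set r := (u * A - (L u).toReal - b) / 3 with hr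
  have hr₀ : 0 < r := by linarith
  obtain ⟨C, hC, hE⟩ := hE (r / (u + 1)) (by positivity)
  filter_upwards [self_mem_nhdsWithin,
    (tendsto_mul_mul_nhdsGT_zero C (u ^ 2)).eventually_le_const hr₀] with δ (hδ : 0 < δ) hsmall
  obtain ⟨i, hi, hBi⟩ := hB (δ * u) (by positivity) (δ * r) (by positivity)
  have hLi : L (c i / δ) ≤ L u := hmono (div_nonneg (hc i) hδ.le) hu ((div_le_iff₀' hδ).2 hi)
  refine le_iSup_of_le i ?_
  rw [coe_sub_ofReal_mul hδ.le _ (ne_top_of_le_ne_top hLu hLi), EReal.coe_le_coe_iff]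
  have hLi := mul_le_mul_of_nonneg_left (ENNReal.toReal_mono hLu hLi) hδ.le
  have hlin : r / (u + 1) * c i ≤ δ * r := calc
    r / (u + 1) * c i ≤ r / (u + 1) * (δ * (u + 1)) := by gcongr; linarith
    _ = δ * r := by field_simp
  have hquad : C * c i ^ 2 ≤ δ * r := calc
    C * c i ^ 2 ≤ C * (δ * u) ^ 2 := by gcongr; exact hc i
    _ = δ * (C * δ * u ^ 2) := by ring
    _ ≤ δ * r := by gcongr
  have hδr : δ * (3 * r) = δ * (u * A - (L u).toReal - b) := by rw [hr]; ring
  linarith [(abs_le.1 (hE i)).1]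

theorem tendsto_penalisedSup (hmono : MonotoneOn L (Ici 0)) (hκ : 0 < κ)
    (hgrowth : ∀ᶠ u in atTop, ENNReal.ofReal (κ * u ^ 2) ≤ L u) (hc : ∀ i, 0 ≤ c i)
    (hE : ∀ ε > 0, ∃ C, 0 ≤ C ∧ ∀ i, |E i - E₀ - B i| ≤ ε * c i + C * c i ^ 2)
    (hBle : ∀ i, B i ≤ A * c i)
    (hBge : ∀ t, 0 ≤ t → ∀ ε > 0, ∃ i, c i ≤ t ∧ t * A - ε ≤ B i) :
    Tendsto (fun δ : ℝ => ((1 / δ : ℝ) : EReal) * (penalisedSup L E c δ - (E₀ : EReal)))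
      (𝓝[>] 0) (𝓝 (Lconj L A)) := by
  refine tendsto_order.2 ⟨fun v hv => ?_, fun v hv => ?_⟩
  · obtain ⟨b, hvb, hbL⟩ := EReal.lt_iff_exists_real_btwn.1 hv
    filter_upwards [self_mem_nhdsWithin, eventually_le_penalisedSup hmono hc hE hBge hbL]
      with δ hδ hV
    exact hvb.trans_le (le_inv_mul_sub_of_add_mul_le hδ hV)
  · obtain ⟨b, hLb, hbv⟩ := EReal.lt_iff_exists_real_btwn.1 hv
    obtain ⟨a, hLa, hab⟩ := EReal.lt_iff_exists_real_btwn.1 hLb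
    filter_upwards [self_mem_nhdsWithin, eventually_penalisedSup_le hκ hgrowth hc hE hBle hLa.le
      (EReal.coe_lt_coe_iff.1 hab)] with δ hδ hV
    exact (inv_mul_sub_le_of_le_add_mul hδ hV).trans_lt hbv

end PenalisedSupremum

theorem PenaltyAssumptions.eventually_mul_sq_le {L : ℝ → ℝ≥0∞} (hL : PenaltyAssumptions 2 L)
    (κ : ℝ) : ∀ᶠ u in atTop, ENNReal.ofReal (κ * u ^ 2) ≤ L u := by
  filter_upwards [hL.growth.eventually_const_le ENNReal.ofReal_lt_top, eventually_gt_atTop 0]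
    with u (hu : ENNReal.ofReal κ ≤ _) hu₀
  rw [ENNReal.ofReal_mul' (sq_nonneg u), ← Real.rpow_two]
  exact (ENNReal.le_div_iff_mul_le (Or.inl (ENNReal.ofReal_pos.2 (by positivity)).ne')
    (Or.inl ENNReal.ofReal_ne_top)).1 hu

theorem statement_12_general {N d : ℕ}
    (L : ℝ → ℝ≥0∞) (hmono : MonotoneOn L (Set.Ici 0))
    (κ : ℝ) (hκ : 0 < κ) (hgrowth : ∀ᶠ u : ℝ in atTop, ENNReal.ofReal (κ * u ^ 2) ≤ L u)
    (μ : Measure (PathD N d)) [IsProbabilityMeasure μ]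
    (hmart : IsMartingaleMeasure μ)
    (hmom : Integrable (fun x : PathD N d => ‖x‖ ^ (2 : ℝ)) μ)
    (f : PathD N d → ℝ) (hf : ContDiff ℝ 1 f)
    (C : ℝ) (hgrow : ∀ n : ℕ, ∀ x : PathD N d,
      lpnorm 2 (Dn f n x) ≤ C * (1 + ‖x‖)) :
    Tendsto (fun δ : ℝ =>
        (((1 / δ : ℝ)) : EReal) * (VMartD 2 L μ f δ - ((∫ x, f x ∂μ : ℝ) : EReal)))
      (nhdsWithin 0 (Set.Ioi 0))
      (nhds (Lconj L
        ((∑ n ∈ Finset.Icc 1 N,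
          ∫ x, lpnorm 2 ((μ[Dn f n | Fn N d n]) x - (μ[Dn f n | Fn N d (n - 1)]) x)
            ^ (2 : ℝ) ∂μ) ^ (1 / 2 : ℝ)))) := by
  have hμ : MemLp id 2 μ := (memLp_two_iff_integrable_sq_norm aestronglyMeasurable_id).2 <| by
    simpa only [id_eq, Real.rpow_two] using hmom
  have hDf := memLp_malliavin hμ hf hgrow
  have hg := isMartingaleDifference_innovation hDf
  have hV (δ : ℝ) : VMartD 2 L μ f δ = penalisedSup L
      (fun π : {π // IsAdmissible μ π} => ∫ z, f z.2 ∂π.1)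
      (fun π => lpNorm displacement 2 π.1) δ := by
    simp only [VMartD, penalisedSup, costD_two_rpow]
    rfl
  rw [← lpNorm_innovation_malliavin hDf]
  simp only [hV]
  refine tendsto_penalisedSup hmono hκ hgrowth (fun _ => lpNorm_nonneg) (fun ε hε => ?_)
    (fun π => π.2.integral_inner_le hg.memLp) (fun t ht ε hε => ?_)
  · obtain ⟨C', hC', hexp⟩ := exists_abs_integral_sub_integral_inner_le hmart hμ hf hgrow hε
    exact ⟨C', hC', fun π => hexp π.1 π.2⟩
  · obtain ⟨π, hπ, hcost, hinner⟩ := exists_isAdmissible_ge hmart hg ht hε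
    exact ⟨⟨π, hπ⟩, hcost, hinner⟩

/-- Discrete-time sensitivity under the martingale constraint for `p = 2`:
`lim_{δ→0+} (V_Mart(δ) − V_Mart(0))/δ
  = L*((Σ_{n=1}^N E_μ[|E_μ[𝔻_n f(X)|F_n] − E_μ[𝔻_n f(X)|F_{n−1}]|²])^{1/2})`,
i.e. the sensitivity equals `L*(‖ᵒ𝔻f − ᵖ𝔻f‖_{L²(μ)})`. -/
theorem statement_12 {N d : ℕ}
    (L : ℝ → ℝ≥0∞) (hL : PenaltyAssumptions 2 L)
    (μ : Measure (PathD N d)) [IsProbabilityMeasure μ]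
    (hmart : IsMartingaleMeasure μ)
    (hmom : Integrable (fun x : PathD N d => ‖x‖ ^ (2 : ℝ)) μ)
    (f : PathD N d → ℝ) (hf : ContDiff ℝ 1 f)
    (C : ℝ) (hgrow : ∀ n : ℕ, ∀ x : PathD N d,
      lpnorm 2 (Dn f n x) ≤ C * (1 + ‖x‖)) :
    Tendsto (fun δ : ℝ =>
        (((1 / δ : ℝ)) : EReal) * (VMartD 2 L μ f δ - ((∫ x, f x ∂μ : ℝ) : EReal)))
      (nhdsWithin 0 (Set.Ioi 0))
      (nhds (Lconj L
        ((∑ n ∈ Finset.Icc 1 N,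
          ∫ x, lpnorm 2 ((μ[Dn f n | Fn N d n]) x - (μ[Dn f n | Fn N d (n - 1)]) x)
            ^ (2 : ℝ) ∂μ) ^ (1 / 2 : ℝ)))) := by
  exact statement_12_general L hL.mono 1 one_pos (hL.eventually_mul_sq_le 1) μ hmart hmom f hf C
    hgrow

end
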